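/- arXiv:2103.04012 — 7 statements merged into one kernel-verified Lean document; each statement's English description precedes it below -/
import Mathlib

section
/- Let K be a compact Hausdorff space, X a complex Banach space, and S a closed subspace of the Banach space C(K,X) of continuous X-valued functions with the supremum norm. Let A := {x* ∘ f : f ∈ S, x* ∈ X*}. If L ⊆ K is a closed subset such that every φ ∈ A attains its supremum norm on L (i.e., for every φ ∈ A there exists t ∈ L with |φ(t)| = sup_{s∈K}|φ(s)|), then for every f ∈ S one has sup_{t∈L} ‖f(t)‖_X = sup_{t∈K} ‖f(t)‖_X; in particular the restriction map f ↦ f|_L is an isometry. -/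
set_option maxHeartbeats 1000000
set_option synthInstance.maxHeartbeats 1000000

/-!
A function `f` in the space attains its norm at some `s`, and by Hahn–Banach a functional `φ` of
norm at most one satisfies `φ (f s) = ‖f s‖ = ‖f‖`. The scalar function `φ ∘ f` then has norm at
least `‖f‖`, and it attains its norm at some `t ∈ L`, so `‖f‖ ≤ ‖φ (f t)‖ ≤ ‖f t‖`: thus `f` itself
attains its norm on `L`.
-/

-- For `i ∉ s` the inner supremum takes the junk value `sSup ∅`, which is `0` in `ℝ`.
theorem biSup_eq_of_isGreatest_image {ι α : Type*} [ConditionallyCompleteLattice α] {f : ι → α}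
    {s : Set ι} {a : α} (ha : IsGreatest (f '' s) a) (h_empty : sSup ∅ ≤ a) :
    (⨆ i ∈ s, f i) = a := by
  have h_bdd : BddAbove (Set.range fun i : s ↦ f i) := by
    simpa only [Set.image_eq_range] using ha.bddAbove
  have h_iSup : ⨆ i : s, f i = a := by rw [← sSup_image', ha.csSup_eq]
  rw [← ciSup_subtype_fun h_bdd (h_empty.trans_eq h_iSup.symm), h_iSup]

section ContinuousMap

variable {K E : Type*} [TopologicalSpace K] [CompactSpace K] [SeminormedAddCommGroup E]

theorem exists_norm_apply_eq_norm [Nonempty K] (f : C(K, E)) : ∃ t, ‖f t‖ = ‖f‖ := by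
  rw [f.norm_eq_iSup_norm]
  exact (isCompact_range (by fun_prop)).sSup_mem (Set.range_nonempty fun t ↦ ‖f t‖)

/-- A boundary for a family `A` of continuous maps on `K`: a subset of `K` on which every member
of `A` attains its supremum norm. The maps may be vector-valued, and the subset need not be
closed. -/
def IsNormBoundary (L : Set K) (A : Set C(K, E)) : Prop :=
  ∀ f ∈ A, ∃ t ∈ L, ‖f t‖ = ‖f‖

theorem IsNormBoundary.biSup_norm_apply_eq {L : Set K} {A : Set C(K, E)}
    (hL : IsNormBoundary L A) {f : C(K, E)} (hf : f ∈ A) : (⨆ t ∈ L, ‖f t‖) = ‖f‖ := by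
  refine biSup_eq_of_isGreatest_image ⟨hL f hf, ?_⟩ (Real.sSup_empty.trans_le (norm_nonneg f))
  rintro _ ⟨t, -, rfl⟩
  exact f.norm_coe_le_norm t

end ContinuousMap

section Dual

variable {K : Type*} [TopologicalSpace K] {𝕜 : Type*} [RCLike 𝕜]
  {X : Type*} [SeminormedAddCommGroup X] [NormedSpace 𝕜 X]

variable (𝕜) in
/-- The family `{x* ∘ f : f ∈ S, x* ∈ X*}` of scalar functions obtained by composing the members
of `S` with continuous linear functionals. -/
def dualComposites (S : Set C(K, X)) : Set C(K, 𝕜) :=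
  {g | ∃ f ∈ S, ∃ φ : X →L[𝕜] 𝕜, ∀ t : K, g t = φ (f t)}

variable [CompactSpace K] {L : Set K}

theorem IsNormBoundary.of_dualComposites {S : Set C(K, X)}
    (hL : IsNormBoundary L (dualComposites 𝕜 S)) : IsNormBoundary L S := by
  intro f hf
  have : Nonempty K := by
    obtain ⟨t, -⟩ := hL 0 ⟨f, hf, 0, fun _ ↦ rfl⟩
    exact ⟨t⟩
  obtain ⟨s, hs⟩ := exists_norm_apply_eq_norm f
  obtain ⟨φ, hφ, hφs⟩ := exists_dual_vector'' 𝕜 (f s)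
  let g : C(K, 𝕜) := (φ : C(X, 𝕜)).comp f
  obtain ⟨t, htL, ht⟩ := hL g ⟨f, hf, φ, fun _ ↦ rfl⟩
  refine ⟨t, htL, (f.norm_coe_le_norm t).antisymm ?_⟩
  calc
    ‖f‖ = ‖g s‖ := by simp [g, hφs, hs]
    _ ≤ ‖g‖ := g.norm_coe_le_norm s
    _ = ‖φ (f t)‖ := ht.symm
    _ ≤ ‖f t‖ := by simpa only [one_mul] using φ.le_of_opNorm_le hφ (f t)

theorem stmt_2_general {σ : Type*} [SetLike σ C(K, X)] [AddSubgroupClass σ C(K, X)] (S : σ)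
    (hL : IsNormBoundary L (dualComposites 𝕜 (S : Set C(K, X)))) :
    (∀ f ∈ S, (⨆ t ∈ L, ‖f t‖) = ‖f‖) ∧
    (∀ f ∈ S, ∀ g ∈ S, (⨆ t ∈ L, ‖f t - g t‖) = ‖f - g‖) :=
  have hS : IsNormBoundary L (S : Set C(K, X)) := hL.of_dualComposites
  ⟨fun _ hf ↦ hS.biSup_norm_apply_eq hf,
    fun _ hf _ hg ↦ hS.biSup_norm_apply_eq (sub_mem hf hg)⟩

end Dual

/- STATEMENT 2: If `S` is a closed subspace of `C(K,X)`, `A = {x* ∘ f : f ∈ S, x* ∈ X*}`,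
and `L ⊆ K` is a closed subset on which every element of `A` attains its supremum norm,
then for every `f ∈ S` the supremum of `‖f t‖` over `L` equals `‖f‖`; in particular
the restriction map `f ↦ f|_L` is an isometry. -/
theorem stmt_2 {K : Type*} [TopologicalSpace K] [CompactSpace K] [T2Space K]
    {X : Type*} [NormedAddCommGroup X] [NormedSpace ℂ X] [CompleteSpace X]
    (S : Submodule ℂ C(K, X)) (hSclosed : IsClosed (S : Set C(K, X)))
    (L : Set K) (hLclosed : IsClosed L)
    (hLbd : ∀ g : C(K, ℂ), (∃ f ∈ S, ∃ φ : X →L[ℂ] ℂ, ∀ t : K, g t = φ (f t)) →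
      ∃ t ∈ L, ‖g t‖ = ‖g‖) :
    (∀ f ∈ S, (⨆ t ∈ L, ‖f t‖) = ‖f‖) ∧
    (∀ f ∈ S, ∀ g ∈ S, (⨆ t ∈ L, ‖f t - g t‖) = ‖f - g‖) :=
  stmt_2_general S hLbd
end

section
/- Let A be a uniform algebra on a compact Hausdorff space K, and let Γ ⊆ K be a closed boundary for A in which the set of strong boundary points of A is dense (these properties hold for the Shilov boundary of A). If t₀ is an isolated point of Γ (i.e., there is an open set U ⊆ K with U ∩ Γ = {t₀}), then there exists φ ∈ A such that φ(t₀) = ‖φ‖_∞ = 1 and φ(t) = 0 for every t ∈ Γ∖{t₀}. -/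
set_option maxHeartbeats 1000000
set_option synthInstance.maxHeartbeats 1000000

/-- `t₀` is a strong boundary point for the algebra `A ⊆ C(K,ℂ)`: for every open
neighborhood `U` of `t₀` there is `f ∈ A` with `f t₀ = ‖f‖ = 1` and
`sup_{t ∈ K∖U} |f t| < 1`. -/
def IsStrongBoundaryPoint {K : Type*} [TopologicalSpace K] [CompactSpace K]
    (A : Subalgebra ℂ C(K, ℂ)) (t₀ : K) : Prop :=
  ∀ U : Set K, IsOpen U → t₀ ∈ U →
    ∃ f ∈ A, f t₀ = 1 ∧ ‖f‖ = 1 ∧ ∃ c : ℝ, c < 1 ∧ ∀ t ∉ U, ‖f t‖ ≤ c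

/-! A strong boundary point `t₀` isolated in the boundary `Γ` yields `f ∈ A` with `f t₀ = 1` and
`|f| ≤ r < 1` on `Γ \ {t₀}`. Then `|f ^ n - f ^ (n + 1)| ≤ 2 r ^ n` on `Γ`, hence on `K` because
`Γ` is a boundary. So the powers of `f` converge uniformly, and their limit in `A` restricts to the
indicator of `{t₀}` on `Γ`. -/

open Filter Topology

/-- `Γ` is a boundary for the set `S` of continuous functions on a compact space: every member of
`S` attains its norm on `Γ`. -/
def IsBoundary {K E : Type*} [TopologicalSpace K] [CompactSpace K] [SeminormedAddCommGroup E]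
    (S : Set C(K, E)) (Γ : Set K) : Prop :=
  ∀ f ∈ S, ∃ t ∈ Γ, ‖f t‖ = ‖f‖

theorem IsBoundary.norm_le {K E : Type*} [TopologicalSpace K] [CompactSpace K]
    [SeminormedAddCommGroup E] {S : Set C(K, E)} {Γ : Set K} (hΓ : IsBoundary S Γ)
    {f : C(K, E)} (hf : f ∈ S) {M : ℝ} (hM : ∀ t ∈ Γ, ‖f t‖ ≤ M) : ‖f‖ ≤ M := by
  obtain ⟨t, ht, hft⟩ := hΓ f hf
  exact hft ▸ hM t ht

theorem norm_pow_sub_pow_succ_le {R : Type*} [SeminormedRing R] [NormOneClass R] {x : R} {r : ℝ}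
    (hx : ‖x‖ ≤ r) (hr : r ≤ 1) (n : ℕ) : ‖x ^ n - x ^ (n + 1)‖ ≤ 2 * r ^ n := by
  have norm_one_sub_le : ‖1 - x‖ ≤ 2 := by
    have := norm_sub_le 1 x
    rw [norm_one] at this
    linarith
  calc ‖x ^ n - x ^ (n + 1)‖ = ‖(1 - x) * x ^ n‖ := by rw [pow_succ', sub_mul, one_mul]
    _ ≤ ‖1 - x‖ * ‖x ^ n‖ := norm_mul_le _ _
    _ ≤ ‖1 - x‖ * ‖x‖ ^ n := by gcongr; exact norm_pow_le x n
    _ ≤ 2 * r ^ n := by gcongr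

section Powers

variable {K R : Type*} [TopologicalSpace K] [CompactSpace K] [NormedRing R] [NormOneClass R]
  {𝒜 : Type*} [SetLike 𝒜 C(K, R)] [SubringClass 𝒜 C(K, R)] {A : 𝒜} {Γ : Set K} {f : C(K, R)} {c : ℝ}

theorem IsBoundary.cauchySeq_pow (hΓ : IsBoundary (A : Set C(K, R)) Γ) (hf : f ∈ A) (hc : c < 1)
    (hfΓ : ∀ t ∈ Γ, f t = 1 ∨ ‖f t‖ ≤ c) : CauchySeq (fun n : ℕ => f ^ n) := by
  have hr : max c 0 < 1 := max_lt hc one_pos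
  refine cauchySeq_of_le_geometric (max c 0) 2 hr fun n => ?_
  rw [dist_eq_norm]
  refine hΓ.norm_le (sub_mem (pow_mem hf n) (pow_mem hf (n + 1))) fun t ht => ?_
  rw [ContinuousMap.sub_apply, ContinuousMap.pow_apply, ContinuousMap.pow_apply]
  obtain hft | hft := hfΓ t ht
  · rw [hft, one_pow, one_pow, sub_self, norm_zero]
    positivity
  · exact norm_pow_sub_pow_succ_le (hft.trans (le_max_left c 0)) hr.le n

theorem IsBoundary.exists_eqOn_indicator_one [CompleteSpace R]
    (hΓ : IsBoundary (A : Set C(K, R)) Γ) (hA : IsClosed (A : Set C(K, R))) (hf : f ∈ A)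
    (hc : c < 1) {F : Set K} (hfF : ∀ t ∈ Γ ∩ F, f t = 1) (hfc : ∀ t ∈ Γ \ F, ‖f t‖ ≤ c) :
    ∃ φ ∈ A, Set.EqOn φ (F.indicator 1) Γ := by
  have hcauchy : CauchySeq (fun n : ℕ => f ^ n) := hΓ.cauchySeq_pow hf hc fun t ht =>
    (em (t ∈ F)).imp (fun htF => hfF t ⟨ht, htF⟩) (fun htF => hfc t ⟨ht, htF⟩)
  obtain ⟨φ, hφ⟩ := cauchySeq_tendsto_of_complete hcauchy
  have hφA : φ ∈ A := hA.mem_of_tendsto hφ (.of_forall fun n => pow_mem hf n)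
  have hlim (t : K) : Tendsto (fun n : ℕ => f t ^ n) atTop (𝓝 (φ t)) :=
    ((continuous_eval_const t).tendsto φ).comp hφ
  refine ⟨φ, hφA, fun t ht => tendsto_nhds_unique (hlim t) ?_⟩
  by_cases htF : t ∈ F
  · simp only [hfF t ⟨ht, htF⟩, one_pow, Set.indicator_of_mem htF, Pi.one_apply, tendsto_const_nhds]
  · rw [Set.indicator_of_notMem htF]
    exact tendsto_pow_atTop_nhds_zero_of_norm_lt_one ((hfc t ⟨ht, htF⟩).trans_lt hc)

end Powers

theorem mem_of_subset_closure_of_inter_eq_singleton {X : Type*} [TopologicalSpace X]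
    {S T U : Set X} {x : X} (hST : S ⊆ T) (hT : T ⊆ closure S) (hU : IsOpen U)
    (hx : U ∩ T = {x}) : x ∈ S := by
  have hxUT : x ∈ U ∩ T := hx ▸ Set.mem_singleton x
  obtain ⟨y, hyU, hyS⟩ := mem_closure_iff.1 (hT hxUT.2) U hU hxUT.1
  have hyx : y ∈ ({x} : Set X) := hx ▸ ⟨hyU, hST hyS⟩
  exact Set.mem_singleton_iff.1 hyx ▸ hyS

theorem stmt_3_general {K : Type*} [TopologicalSpace K] [CompactSpace K]
    {A : Subalgebra ℂ C(K, ℂ)} (hA : IsClosed (A : Set C(K, ℂ))) {Γ : Set K}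
    (hΓ : IsBoundary (A : Set C(K, ℂ)) Γ) {t₀ : K} (ht₀ : IsStrongBoundaryPoint A t₀)
    {U : Set K} (hU : IsOpen U) (hUΓ : U ∩ Γ = {t₀}) :
    ∃ φ ∈ A, φ t₀ = 1 ∧ ‖φ‖ = 1 ∧ ∀ t ∈ Γ \ {t₀}, φ t = 0 := by
  have ht₀UΓ : t₀ ∈ U ∩ Γ := hUΓ ▸ Set.mem_singleton t₀
  obtain ⟨f, hfA, hft₀, -, c, hc, hfc⟩ := ht₀ U hU ht₀UΓ.1
  have hf_off : ∀ t ∈ Γ \ {t₀}, ‖f t‖ ≤ c := fun t ht =>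
    hfc t fun htU => ht.2 (hUΓ ▸ ⟨htU, ht.1⟩)
  obtain ⟨φ, hφA, hφ⟩ := hΓ.exists_eqOn_indicator_one hA hfA hc
    (by rintro t ⟨-, rfl⟩; exact hft₀) hf_off
  have hφt₀ : φ t₀ = 1 := by
    rw [hφ ht₀UΓ.2, Set.indicator_of_mem (Set.mem_singleton t₀), Pi.one_apply]
  have hφ_le : ‖φ‖ ≤ 1 := hΓ.norm_le hφA fun t ht => by
    rw [hφ ht]
    exact (norm_indicator_le_norm_self _ t).trans_eq norm_one
  have hφ_ge : 1 ≤ ‖φ‖ := by simpa only [hφt₀, norm_one] using φ.norm_coe_le_norm t₀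
  exact ⟨φ, hφA, hφt₀, hφ_le.antisymm hφ_ge, fun t ht =>
    (hφ ht.1).trans (Set.indicator_of_notMem ht.2 1)⟩

/- STATEMENT 3: Let `A` be a uniform algebra on a compact Hausdorff space `K` and
`Γ` a closed boundary for `A` in which the strong boundary points of `A` are dense.
If `t₀` is an isolated point of `Γ` (witnessed by an open `U ⊆ K` with `U ∩ Γ = {t₀}`),
then there is `φ ∈ A` with `φ t₀ = ‖φ‖ = 1` and `φ ≡ 0` on `Γ ∖ {t₀}`. -/
theorem stmt_3 {K : Type*} [TopologicalSpace K] [CompactSpace K] [T2Space K]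
    (A : Subalgebra ℂ C(K, ℂ)) (hAclosed : IsClosed (A : Set C(K, ℂ)))
    (hAsep : ∀ s t : K, s ≠ t → ∃ f ∈ A, f s ≠ f t)
    (Γ : Set K) (hΓclosed : IsClosed Γ)
    (hΓbd : ∀ f ∈ A, ∃ t ∈ Γ, ‖f t‖ = ‖f‖)
    (hΓdense : Γ ⊆ closure {t | t ∈ Γ ∧ IsStrongBoundaryPoint A t})
    (t₀ : K) (U : Set K) (hUopen : IsOpen U) (hUiso : U ∩ Γ = {t₀}) :
    ∃ φ ∈ A, φ t₀ = 1 ∧ ‖φ‖ = 1 ∧ ∀ t ∈ Γ \ {t₀}, φ t = 0 :=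
  stmt_3_general hAclosed hΓbd
    (mem_of_subset_closure_of_inter_eq_singleton (fun _ ht => ht.1) hΓdense hUopen hUiso).2
    hUopen hUiso
end

section
/- Every infinite-dimensional uniform algebra A on a compact Hausdorff space K has the symmetric strong diameter two property: for every n ∈ ℕ, every finite family of slices S₁,…,Sₙ of the closed unit ball B_A and every ε > 0, there exist f_i ∈ S_i (i = 1,…,n) and g ∈ B_A such that f_i ± g ∈ S_i for every i ∈ {1,…,n} and ‖g‖_∞ > 1 − ε. -/
set_option maxHeartbeats 1000000
set_option synthInstance.maxHeartbeats 1000000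

/-!
A minimal closed set `E ⊆ K` on which every function of `A` attains its norm is infinite, since `A`
restricts injectively to it. Choose disjoint nonempty relatively open sets `U₀, U₁, …` of `E`; by
minimality there are norm-one functions in `A` attaining the value `1` and arbitrarily small on
`E \ Uₙ`. Composing them with polynomials that map the unit disc close to the segment `[0, 1]` and
fix both endpoints approximately gives `gₙ ∈ A` with `‖tₙ - gₙ(x)‖ + ‖gₙ(x)‖ ≤ 1`, where `tₙ → 1`
and `‖gₙ‖ → 1`. Since `∑ ‖gₙ‖` is bounded on `E`, the sequence `gₙ` is weakly null. If `fᵢ` in the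
unit ball nearly norms `ψᵢ`, then `tₙ fᵢ - fᵢ gₙ` and `gₙ` satisfy the conclusion for large `n`.
-/

open Filter Topology Polynomial Function

section Functionals

variable {𝕜 X : Type*} [RCLike 𝕜]

lemma exists_norm_le_one_lt_re_apply [NormedAddCommGroup X] [NormedSpace 𝕜 X] (φ : X →L[𝕜] 𝕜)
    {r : ℝ} (hr : r < ‖φ‖) :
    ∃ x, ‖x‖ ≤ 1 ∧ r < RCLike.re (φ x) := by
  obtain ⟨x, hx, hrx⟩ := φ.exists_lt_apply_of_lt_opNorm hr
  obtain ⟨c, hc, hcx⟩ := RCLike.exists_norm_eq_mul_self (φ x)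
  refine ⟨c • x, by simpa [norm_smul, hc] using hx.le, ?_⟩
  rwa [map_smul, smul_eq_mul, ← hcx, RCLike.ofReal_re]

lemma summable_norm_apply_of_norm_sum_smul_le [SeminormedAddCommGroup X] [NormedSpace 𝕜 X]
    {ι : Type*} {x : ι → X} {M : ℝ}
    (hx : ∀ (s : Finset ι) (c : ι → 𝕜), (∀ i, ‖c i‖ ≤ 1) → ‖∑ i ∈ s, c i • x i‖ ≤ M)
    (φ : X →L[𝕜] 𝕜) : Summable fun i ↦ ‖φ (x i)‖ := by
  choose c hc hcx using fun i ↦ RCLike.exists_norm_eq_mul_self (φ (x i))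
  refine summable_of_sum_le (c := ‖φ‖ * M) (fun i ↦ norm_nonneg _) fun s ↦ ?_
  have hsum : φ (∑ i ∈ s, c i • x i) = ((∑ i ∈ s, ‖φ (x i)‖ : ℝ) : 𝕜) := by
    simp [hcx]
  calc ∑ i ∈ s, ‖φ (x i)‖ = ‖φ (∑ i ∈ s, c i • x i)‖ := by
        rw [hsum, RCLike.norm_of_nonneg (Finset.sum_nonneg fun i _ ↦ norm_nonneg _)]
    _ ≤ ‖φ‖ * M := φ.le_opNorm_of_le (hx s c fun i ↦ (hc i).le)

end Functionals

section ThinPolynomials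

lemma norm_neg_log_one_sub_add_norm_sub_le {w : ℂ} {r : ℝ} (hw : ‖w‖ ≤ r) (hr : r < 1) :
    ‖-Complex.log (1 - w)‖ + ‖(-Real.log (1 - r) : ℂ) - -Complex.log (1 - w)‖ ≤
      -Real.log (1 - r) + 2 * Real.log 2 + Real.pi := by
  set l := -Complex.log (1 - w) with hl
  have hlower : 1 - r ≤ ‖1 - w‖ := by
    have := norm_sub_norm_le (1 : ℂ) w
    rw [norm_one] at this
    linarith
  have hupper : ‖1 - w‖ ≤ 2 := by
    have := norm_sub_le (1 : ℂ) w
    rw [norm_one] at this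
    linarith
  have hre_le : l.re ≤ -Real.log (1 - r) := by
    simpa [hl, Complex.log_re] using Real.log_le_log (by linarith) hlower
  have hle_re : -Real.log 2 ≤ l.re := by
    simpa [hl, Complex.log_re] using Real.log_le_log (by linarith) hupper
  have him : |l.im| ≤ Real.pi / 2 := by
    rw [hl, Complex.neg_im, abs_neg, Complex.log_im, Complex.abs_arg_le_pi_div_two_iff]
    simpa using (Complex.re_le_norm w).trans (hw.trans hr.le)
  have hnorm : ‖l‖ ≤ |l.re| + |l.im| := Complex.norm_le_abs_re_add_abs_im l
  have hnorm_sub : ‖(-Real.log (1 - r) : ℂ) - l‖ ≤ -Real.log (1 - r) - l.re + |l.im| := by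
    have := Complex.norm_le_abs_re_add_abs_im ((-Real.log (1 - r) : ℂ) - l)
    simpa [abs_of_nonneg (sub_nonneg.2 hre_le)] using this
  have habs : |l.re| ≤ l.re + 2 * Real.log 2 := by
    have := Real.log_nonneg one_le_two
    rw [abs_le]
    constructor <;> linarith
  linarith

/-- The Taylor polynomial of degree `N - 1` of `z ↦ -log (1 - (1 - 1 / N) z)`. This function maps
the unit disc into a strip of bounded height, so dividing by `log N` flattens its image. For this
choice of the radius its value at `1` is `log N`, while the truncation error on the closed unit disc
stays bounded. -/
noncomputable def truncatedNegLog (N : ℕ) : ℂ[X] :=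
  ∑ j ∈ Finset.range N, monomial j ((1 - (N : ℂ)⁻¹) ^ j / j)

lemma eval_truncatedNegLog (N : ℕ) (z : ℂ) :
    (truncatedNegLog N).eval z = -Complex.logTaylor N (-((1 - (N : ℂ)⁻¹) * z)) := by
  rw [truncatedNegLog, eval_finsetSum, Complex.logTaylor, ← Finset.sum_neg_distrib]
  refine Finset.sum_congr rfl fun j _ ↦ ?_
  rw [eval_monomial]
  have hsign : (-1 : ℂ) ^ (j + 1) * (-1) ^ j = -1 := by
    rw [← pow_add]; exact Odd.neg_one_pow ⟨j, by ring⟩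
  rw [neg_pow (_ * z), ← mul_assoc, hsign, mul_pow]
  ring

lemma eval_zero_truncatedNegLog (N : ℕ) : (truncatedNegLog N).eval 0 = 0 := by
  simp [eval_truncatedNegLog, Complex.logTaylor_at_zero]

lemma norm_one_sub_inv_mul_le (N : ℕ) {z : ℂ} (hz : ‖z‖ ≤ 1) :
    ‖(1 - (N : ℂ)⁻¹) * z‖ ≤ 1 - (N : ℝ)⁻¹ := by
  have hnonneg : 0 ≤ 1 - (N : ℝ)⁻¹ := sub_nonneg.2 (Nat.cast_inv_le_one N)
  have hnorm : ‖1 - (N : ℂ)⁻¹‖ = 1 - (N : ℝ)⁻¹ := by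
    simpa using Complex.norm_of_nonneg hnonneg
  rw [norm_mul, hnorm]
  exact mul_le_of_le_one_right hnonneg hz

lemma norm_eval_truncatedNegLog_sub_le {N : ℕ} (hN : N ≠ 0) {z : ℂ} (hz : ‖z‖ ≤ 1) :
    ‖(truncatedNegLog N).eval z - -Complex.log (1 - (1 - (N : ℂ)⁻¹) * z)‖ ≤ 1 := by
  obtain ⟨n, rfl⟩ := Nat.exists_eq_succ_of_ne_zero hN
  set w := (1 - ((n + 1 : ℕ) : ℂ)⁻¹) * z
  have hw : ‖w‖ ≤ 1 - ((n + 1 : ℕ) : ℝ)⁻¹ := norm_one_sub_inv_mul_le _ hz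
  have hinv : 0 < ((n + 1 : ℕ) : ℝ)⁻¹ := by positivity
  have hgap : (1 - ‖w‖)⁻¹ ≤ (n + 1 : ℕ) := inv_le_of_inv_le₀ (by positivity) (by linarith)
  have herr := Complex.norm_log_sub_logTaylor_le n (z := -w) (by rw [norm_neg]; linarith)
  rw [norm_neg, ← sub_eq_add_neg] at herr
  calc ‖(truncatedNegLog (n + 1)).eval z - -Complex.log (1 - w)‖
      = ‖Complex.log (1 - w) - Complex.logTaylor (n + 1) (-w)‖ := by
        rw [eval_truncatedNegLog]; congr 1; ring
    _ ≤ ‖w‖ ^ (n + 1) * (1 - ‖w‖)⁻¹ / (n + 1) := herr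
    _ ≤ 1 * (n + 1 : ℕ) / (n + 1) := by
        gcongr
        · exact inv_nonneg.2 (by linarith)
        · exact pow_le_one₀ (norm_nonneg _) (by linarith)
    _ = 1 := by rw [one_mul, Nat.cast_succ, div_self (by positivity)]

lemma norm_eval_truncatedNegLog_add_norm_sub_le {N : ℕ} (hN : N ≠ 0) {z : ℂ} (hz : ‖z‖ ≤ 1) :
    ‖(truncatedNegLog N).eval z‖ + ‖(Real.log N : ℂ) - (truncatedNegLog N).eval z‖ ≤
      Real.log N + (2 * Real.log 2 + Real.pi + 2) := by
  set l := -Complex.log (1 - (1 - (N : ℂ)⁻¹) * z)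
  have herr : ‖(truncatedNegLog N).eval z - l‖ ≤ 1 := norm_eval_truncatedNegLog_sub_le hN hz
  have hl : ‖l‖ + ‖(Real.log N : ℂ) - l‖ ≤ Real.log N + 2 * Real.log 2 + Real.pi := by
    have hr : 1 - (N : ℝ)⁻¹ < 1 := sub_lt_self 1 (by positivity)
    simpa [-Complex.natCast_log, l] using
      norm_neg_log_one_sub_add_norm_sub_le (norm_one_sub_inv_mul_le _ hz) hr
  have hleft := norm_le_norm_add_norm_sub' ((truncatedNegLog N).eval z) l
  have hright := norm_sub_le_norm_sub_add_norm_sub (Real.log N : ℂ) l ((truncatedNegLog N).eval z)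
  rw [norm_sub_rev l] at hright
  linarith

lemma norm_eval_one_truncatedNegLog_sub_log_le {N : ℕ} (hN : N ≠ 0) :
    ‖(truncatedNegLog N).eval 1 - (Real.log N : ℂ)‖ ≤ 1 := by
  have hlog : -Complex.log (1 - (1 - (N : ℂ)⁻¹) * 1) = (Real.log N : ℂ) := by
    rw [mul_one, sub_sub_cancel, ← Complex.ofReal_natCast, ← Complex.ofReal_inv,
      ← Complex.ofReal_log (by positivity), Real.log_inv, Complex.ofReal_neg, neg_neg]
  simpa only [hlog] using norm_eval_truncatedNegLog_sub_le hN norm_one.le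

lemma exists_seq_polynomial_norm_sub_eval_add_norm_eval_le_one :
    ∃ (P : ℕ → ℂ[X]) (t : ℕ → ℝ), (∀ n, (P n).eval 0 = 0) ∧
      Tendsto (fun n ↦ (P n).eval 1) atTop (𝓝 1) ∧ Tendsto t atTop (𝓝 1) ∧
      ∀ n z, ‖z‖ ≤ 1 → ‖(t n : ℂ) - (P n).eval z‖ + ‖(P n).eval z‖ ≤ 1 := by
  set M := 2 * Real.log 2 + Real.pi + 2
  have hM : 0 < M := by positivity
  set L : ℕ → ℝ := fun n ↦ Real.log (n + 1 : ℕ)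
  have hL : Tendsto L atTop atTop := Real.tendsto_log_atTop.comp
    (tendsto_natCast_atTop_atTop.comp (tendsto_add_atTop_nat 1))
  have hpos (n : ℕ) : 0 < L n + M := add_pos_of_nonneg_of_pos (Real.log_natCast_nonneg _) hM
  have hinv : Tendsto (fun n ↦ (L n + M)⁻¹) atTop (𝓝 0) :=
    (tendsto_atTop_add_const_right _ M hL).inv_tendsto_atTop
  have ht : Tendsto (fun n ↦ (L n + M)⁻¹ * L n) atTop (𝓝 1) := by
    have hsub : (fun n ↦ (L n + M)⁻¹ * L n) = fun n ↦ 1 - (L n + M)⁻¹ * M := by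
      funext n
      field_simp [(hpos n).ne']
      ring
    simpa [hsub] using (hinv.mul_const M).const_sub 1
  refine ⟨fun n ↦ C (((L n + M)⁻¹ : ℝ) : ℂ) * truncatedNegLog (n + 1), fun n ↦ (L n + M)⁻¹ * L n,
    fun n ↦ by rw [eval_C_mul, eval_zero_truncatedNegLog, mul_zero], ?_, ht, fun n z hz ↦ ?_⟩
  · have hdiff : Tendsto (fun n ↦ (((L n + M)⁻¹ : ℝ) : ℂ) *
        ((truncatedNegLog (n + 1)).eval 1 - L n)) atTop (𝓝 0) := by
      refine squeeze_zero_norm (fun n ↦ ?_) hinv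
      rw [norm_mul, Complex.norm_of_nonneg (inv_nonneg.2 (hpos n).le)]
      exact mul_le_of_le_one_right (inv_nonneg.2 (hpos n).le)
        (norm_eval_one_truncatedNegLog_sub_log_le n.succ_ne_zero)
    have hlim := hdiff.add (Complex.continuous_ofReal.tendsto 1 |>.comp ht)
    rw [Complex.ofReal_one, zero_add] at hlim
    refine hlim.congr fun n ↦ ?_
    simp only [Function.comp_apply, eval_C_mul, Complex.ofReal_mul]
    ring
  · rw [eval_C_mul, Complex.ofReal_mul, ← mul_sub, norm_mul, norm_mul, ← mul_add,
      Complex.norm_of_nonneg (inv_nonneg.2 (hpos n).le), inv_mul_le_one₀ (hpos n), add_comm]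
    exact norm_eval_truncatedNegLog_add_norm_sub_le n.succ_ne_zero hz

end ThinPolynomials

section ClosedBoundaries

variable {K F : Type*} [TopologicalSpace K] [CompactSpace K] [NormedAddCommGroup F]

/-- `E` is a closed boundary for the set `S` of functions: every function in `S` attains its norm on
the closed set `E`. The zero function is exempt so that `K` is a closed boundary even when it is
empty. -/
def IsClosedBoundary (S : Set C(K, F)) (E : Set K) : Prop :=
  IsClosed E ∧ ∀ f ∈ S, f ≠ 0 → ∃ x ∈ E, ‖f x‖ = ‖f‖

lemma isClosedBoundary_univ (S : Set C(K, F)) : IsClosedBoundary S Set.univ := by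
  refine ⟨isClosed_univ, fun f _ hf ↦ ?_⟩
  obtain ⟨x₀, -⟩ := DFunLike.ne_iff.1 hf
  obtain ⟨x, -, hx⟩ := isCompact_univ.exists_isMaxOn ⟨x₀, Set.mem_univ x₀⟩
    (map_continuous f).norm.continuousOn
  exact ⟨x, Set.mem_univ x, le_antisymm (f.norm_coe_le_norm x)
    ((f.norm_le (norm_nonneg _)).2 fun y ↦ hx (Set.mem_univ y))⟩

lemma isClosedBoundary_sInter {S : Set C(K, F)} {c : Set (Set K)} (hne : c.Nonempty)
    (hdir : DirectedOn (· ⊇ ·) c) (hc : ∀ E ∈ c, IsClosedBoundary S E) :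
    IsClosedBoundary S (⋂₀ c) := by
  refine ⟨isClosed_sInter fun E hE ↦ (hc E hE).1, fun f hfS hf ↦ ?_⟩
  let peak (E : c) : Set K := E ∩ {x | ‖f x‖ = ‖f‖}
  have hclosed (E : c) : IsClosed (peak E) :=
    (hc E E.2).1.inter (isClosed_eq (map_continuous f).norm continuous_const)
  have hpeak_dir : Directed (· ⊇ ·) peak :=
    fun E E' ↦
      let ⟨E'', h, h'⟩ := hdir.directed_val E E'
      ⟨E'', Set.inter_subset_inter_left _ h, Set.inter_subset_inter_left _ h'⟩
  have := hne.to_subtype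
  obtain ⟨x, hx⟩ := IsCompact.nonempty_iInter_of_directed_nonempty_isCompact_isClosed peak
    hpeak_dir (fun E ↦ (hc E E.2).2 f hfS hf) (fun E ↦ (hclosed E).isCompact) hclosed
  rw [Set.mem_iInter] at hx
  obtain ⟨E, hE⟩ := hne
  exact ⟨x, fun E' hE' ↦ (hx ⟨E', hE'⟩).1, (hx ⟨E, hE⟩).2⟩

lemma exists_minimal_isClosedBoundary (S : Set C(K, F)) : ∃ E, Minimal (IsClosedBoundary S) E := by
  have hchain {c : Set (Set K)} (hc : IsChain (· ⊆ ·) c) : DirectedOn (· ⊇ ·) c :=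
    fun E hE E' hE' ↦ (hc.total hE hE').elim
      (fun h ↦ ⟨E, hE, subset_rfl, h⟩) fun h ↦ ⟨E', hE', h, subset_rfl⟩
  obtain ⟨E, -, hE⟩ := zorn_superset_nonempty {E | IsClosedBoundary S E}
    (fun c hcS hc hne ↦ ⟨⋂₀ c, isClosedBoundary_sInter hne (hchain hc) hcS,
      fun _ ↦ Set.sInter_subset_of_mem⟩) Set.univ (isClosedBoundary_univ S)
  exact ⟨E, hE⟩

lemma IsClosedBoundary.norm_le {S : Set C(K, F)} {E : Set K}
    (hE : IsClosedBoundary S E) {f : C(K, F)} (hf : f ∈ S) {M : ℝ} (hM : 0 ≤ M)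
    (hfM : ∀ x ∈ E, ‖f x‖ ≤ M) : ‖f‖ ≤ M := by
  rcases eq_or_ne f 0 with rfl | hne
  · rwa [norm_zero]
  · obtain ⟨x, hxE, hx⟩ := hE.2 f hf hne
    exact hx ▸ hfM x hxE

lemma IsClosedBoundary.infinite {𝕜 : Type*} [NormedField 𝕜] [NormedSpace 𝕜 F]
    [FiniteDimensional 𝕜 F] {V : Submodule 𝕜 C(K, F)} {E : Set K}
    (hE : IsClosedBoundary (V : Set C(K, F)) E) (hV : ¬ FiniteDimensional 𝕜 V) : E.Infinite := by
  intro hfin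
  have := hfin.to_subtype
  let restrict : V →ₗ[𝕜] E → F :=
    { toFun f x := f.1 x
      map_add' _ _ := rfl
      map_smul' _ _ := rfl }
  refine hV (FiniteDimensional.of_injective restrict <|
    (injective_iff_map_eq_zero _).2 fun f hf ↦ ?_)
  by_contra hne
  obtain ⟨x, hxE, hx⟩ := hE.2 f f.2 (by simpa using hne)
  have hfx : (f : C(K, F)) x = 0 := congrFun hf ⟨x, hxE⟩
  rw [hfx, norm_zero, eq_comm, norm_eq_zero] at hx
  exact hne (Subtype.ext hx)

lemma exists_norm_apply_lt_norm_of_minimal {S : Set C(K, F)} {E U : Set K}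
    (hE : Minimal (IsClosedBoundary S) E) (hU : IsOpen U) (hEU : (E ∩ U).Nonempty) :
    ∃ f ∈ S, f ≠ 0 ∧ ∀ y ∈ E \ U, ‖f y‖ < ‖f‖ := by
  by_contra! hcon
  have hdiff : IsClosedBoundary S (E \ U) := by
    refine ⟨hE.prop.1.sdiff hU, fun f hfS hf ↦ ?_⟩
    obtain ⟨y, hy, hle⟩ := hcon f hfS hf
    exact ⟨y, hy, (f.norm_coe_le_norm y).antisymm hle⟩
  obtain ⟨x, hxE, hxU⟩ := hEU
  exact (hE.le_of_le hdiff Set.sdiff_subset hxE).2 hxU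

end ClosedBoundaries

lemma exists_seq_isOpen_pairwise_disjoint_inter {X : Type*} [TopologicalSpace X] [T2Space X]
    {E : Set X} (hE : E.Infinite) :
    ∃ U : ℕ → Set X, (∀ n, IsOpen (U n)) ∧ (∀ n, (E ∩ U n).Nonempty) ∧
      Pairwise (Disjoint on fun n ↦ E ∩ U n) := by
  have := hE.to_subtype
  obtain ⟨W, hWinf, hWopen, hWdisj⟩ := exists_seq_infinite_isOpen_pairwise_disjoint E
  choose U hU hUW using fun n ↦ isOpen_induced_iff.1 (hWopen n)
  have himage (n : ℕ) : E ∩ U n = (↑) '' W n := by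
    rw [← hUW, Subtype.image_preimage_coe]
  refine ⟨U, hU, fun n ↦ himage n ▸ (hWinf n).nonempty.image _, fun m n hmn ↦ ?_⟩
  simp only [onFun, himage]
  exact (Set.disjoint_image_iff Subtype.val_injective).2 (hWdisj hmn)

section PeakFunctions

variable {𝕜 K : Type*} [NormedField 𝕜] [TopologicalSpace K] [CompactSpace K]
  {A : Subalgebra 𝕜 C(K, 𝕜)} {E U : Set K}

lemma exists_peak_norm_apply_lt_of_minimal (hE : Minimal (IsClosedBoundary (A : Set C(K, 𝕜))) E)
    (hU : IsOpen U) (hEU : (E ∩ U).Nonempty) {κ : ℝ} (hκ : 0 < κ) :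
    ∃ q : A, ‖(q : C(K, 𝕜))‖ ≤ 1 ∧ (∃ x, (q : C(K, 𝕜)) x = 1) ∧
      ∀ y ∈ E \ U, ‖(q : C(K, 𝕜)) y‖ < κ := by
  obtain ⟨f, hfA, hf, hlt⟩ := exists_norm_apply_lt_norm_of_minimal hE hU hEU
  obtain ⟨x, -, hx⟩ := hE.prop.2 f hfA hf
  have hfx : f x ≠ 0 := norm_ne_zero_iff.1 (hx ▸ norm_ne_zero_iff.2 hf)
  obtain ⟨r, hr, hle⟩ : ∃ r < ‖f‖, ∀ y ∈ E \ U, ‖f y‖ ≤ r :=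
    IsCompact.exists_forall_le' (α := ℝᵒᵈ) (hE.prop.1.sdiff hU).isCompact
      (map_continuous f).norm.continuousOn hlt
  obtain ⟨m, hm⟩ := exists_pow_lt_of_lt_one hκ ((div_lt_one (norm_pos_iff.2 hf)).2 hr)
  have hq (y : K) : ‖(((f x)⁻¹ • f) ^ m) y‖ = (‖f y‖ / ‖f‖) ^ m := by
    simp [hx, div_eq_inv_mul]
  refine ⟨⟨((f x)⁻¹ • f) ^ m, A.pow_mem (A.smul_mem hfA _) m⟩, ?_, ⟨x, by simp [hfx]⟩,
    fun y hy ↦ ?_⟩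
  · refine (ContinuousMap.norm_le _ zero_le_one).2 fun y ↦ ?_
    rw [hq]
    exact pow_le_one₀ (by positivity) (div_le_one_of_le₀ (f.norm_coe_le_norm y) (norm_nonneg f))
  · calc ‖(((f x)⁻¹ • f) ^ m) y‖ = (‖f y‖ / ‖f‖) ^ m := hq y
      _ ≤ (r / ‖f‖) ^ m := by gcongr; exact hle y hy
      _ < κ := hm

lemma exists_peak_norm_eval_lt_of_minimal (hE : Minimal (IsClosedBoundary (A : Set C(K, 𝕜))) E)
    (hU : IsOpen U) (hEU : (E ∩ U).Nonempty) {P : 𝕜[X]} (hP : P.eval 0 = 0) {κ : ℝ} (hκ : 0 < κ) :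
    ∃ q : A, ‖(q : C(K, 𝕜))‖ ≤ 1 ∧ (∃ x, (q : C(K, 𝕜)) x = 1) ∧
      ∀ y ∈ E \ U, ‖P.eval ((q : C(K, 𝕜)) y)‖ < κ := by
  obtain ⟨r, hr, hPr⟩ := Metric.continuousAt_iff.1 (P.continuousAt (a := 0)) κ hκ
  obtain ⟨q, hq, hpeak, hoff⟩ := exists_peak_norm_apply_lt_of_minimal hE hU hEU hr
  refine ⟨q, hq, hpeak, fun y hy ↦ ?_⟩
  simpa [hP] using hPr (x := (q : C(K, 𝕜)) y) (by simpa using hoff y hy)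

end PeakFunctions

section WeaklyNull

lemma sum_le_tsum_add_one {ι : Type*} {a κ : ι → ℝ} (hκ : Summable κ) (hκ₀ : ∀ i, 0 ≤ κ i)
    (ha : ∀ i, a i ≤ 1) (hexc : {i | κ i < a i}.Subsingleton) (s : Finset ι) :
    ∑ i ∈ s, a i ≤ ∑' i, κ i + 1 := by
  classical
  have hcard : (s.filter fun i ↦ κ i < a i).card ≤ 1 := Finset.card_le_one.2 fun i hi j hj ↦
    hexc (Finset.mem_filter.1 hi).2 (Finset.mem_filter.1 hj).2
  calc ∑ i ∈ s, a i ≤ ∑ i ∈ s, (κ i + if κ i < a i then 1 else 0) := by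
        refine Finset.sum_le_sum fun i _ ↦ ?_
        split_ifs with hi
        · linarith [ha i, hκ₀ i]
        · linarith
    _ = ∑ i ∈ s, κ i + (s.filter fun i ↦ κ i < a i).card := by
        rw [Finset.sum_add_distrib, Finset.sum_boole]
    _ ≤ ∑' i, κ i + 1 := by
        gcongr
        · exact hκ.sum_le_tsum s fun i _ ↦ hκ₀ i
        · exact_mod_cast hcard

variable {𝕜 K : Type*} [RCLike 𝕜] [TopologicalSpace K] [CompactSpace K]

lemma IsClosedBoundary.summable_norm_apply {A : Subalgebra 𝕜 C(K, 𝕜)} {E : Set K}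
    (hE : IsClosedBoundary (A : Set C(K, 𝕜)) E) {ι : Type*} {U : ι → Set K}
    (hU : Pairwise (Disjoint on fun i ↦ E ∩ U i)) {g : ι → A}
    (hg : ∀ i x, ‖(g i : C(K, 𝕜)) x‖ ≤ 1) {κ : ι → ℝ} (hκ : Summable κ) (hκ₀ : ∀ i, 0 ≤ κ i)
    (hoff : ∀ i, ∀ x ∈ E \ U i, ‖(g i : C(K, 𝕜)) x‖ ≤ κ i) (φ : A →L[𝕜] 𝕜) :
    Summable fun i ↦ ‖φ (g i)‖ := by
  have hmem {x : K} (hx : x ∈ E) {i : ι} (hi : κ i < ‖(g i : C(K, 𝕜)) x‖) : x ∈ E ∩ U i :=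
    ⟨hx, by_contra fun hxU ↦ hi.not_ge (hoff i x ⟨hx, hxU⟩)⟩
  refine summable_norm_apply_of_norm_sum_smul_le (M := ∑' i, κ i + 1) (fun s c hc ↦ ?_) φ
  refine hE.norm_le (SetLike.coe_mem _) (add_nonneg (tsum_nonneg hκ₀) zero_le_one) fun x hx ↦ ?_
  calc ‖((∑ i ∈ s, c i • g i : A) : C(K, 𝕜)) x‖ = ‖∑ i ∈ s, c i * (g i : C(K, 𝕜)) x‖ := by simp
    _ ≤ ∑ i ∈ s, ‖(g i : C(K, 𝕜)) x‖ := by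
        refine norm_sum_le_of_le s fun i _ ↦ ?_
        rw [norm_mul]
        exact mul_le_of_le_one_left (norm_nonneg _) (hc i)
    _ ≤ ∑' i, κ i + 1 := sum_le_tsum_add_one hκ hκ₀ (hg · x)
        (fun i hi j hj ↦ hU.eq (Set.not_disjoint_iff.2 ⟨x, hmem hx hi, hmem hx hj⟩)) s

lemma tendsto_apply_smul_sub_mul_add_smul {X ι : Type*} [NormedRing X] [NormedAlgebra 𝕜 X]
    {l : Filter ι} {t : ι → 𝕜} {g : ι → X} (ht : Tendsto t l (𝓝 1))
    (hg : ∀ φ : X →L[𝕜] 𝕜, Tendsto (fun n ↦ φ (g n)) l (𝓝 0)) (φ : X →L[𝕜] 𝕜) (f : X) (c : 𝕜) :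
    Tendsto (fun n ↦ φ (t n • f - f * g n + c • g n)) l (𝓝 (φ f)) := by
  have hmul : Tendsto (fun n ↦ φ (f * g n)) l (𝓝 0) :=
    hg (φ.comp (ContinuousLinearMap.mul 𝕜 X f))
  simpa using ((ht.mul_const (φ f)).sub hmul).add ((hg φ).const_mul c)

lemma norm_smul_sub_mul_add_smul_le_one {f g : C(K, 𝕜)} {t c : 𝕜} (hf : ‖f‖ ≤ 1) (hc : ‖c‖ ≤ 1)
    (hg : ∀ x, ‖t - g x‖ + ‖g x‖ ≤ 1) : ‖t • f - f * g + c • g‖ ≤ 1 := by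
  refine (ContinuousMap.norm_le _ zero_le_one).2 fun x ↦ ?_
  calc ‖(t • f - f * g + c • g) x‖ = ‖f x * (t - g x) + c * g x‖ := by
        congr 1
        simp only [ContinuousMap.add_apply, ContinuousMap.sub_apply, ContinuousMap.smul_apply,
          ContinuousMap.mul_apply, smul_eq_mul]
        ring
    _ ≤ ‖f x‖ * ‖t - g x‖ + ‖c‖ * ‖g x‖ := by
        simpa only [norm_mul] using norm_add_le (f x * (t - g x)) (c * g x)
    _ ≤ 1 * ‖t - g x‖ + 1 * ‖g x‖ := by
        gcongr
        exact (f.norm_coe_le_norm x).trans hf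
    _ ≤ 1 := by simpa only [one_mul] using hg x

end WeaklyNull

section SymmetricStrongDiameterTwo

variable {K : Type*} [TopologicalSpace K] [CompactSpace K] [T2Space K]

lemma exists_seq_norm_sub_add_norm_le_one_weakly_null (A : Subalgebra ℂ C(K, ℂ))
    (hA : ¬ FiniteDimensional ℂ A) :
    ∃ (t : ℕ → ℝ) (g : ℕ → A), Tendsto t atTop (𝓝 1) ∧ Tendsto (fun n ↦ ‖g n‖) atTop (𝓝 1) ∧
      (∀ n x, ‖(t n : ℂ) - (g n : C(K, ℂ)) x‖ + ‖(g n : C(K, ℂ)) x‖ ≤ 1) ∧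
      ∀ φ : A →L[ℂ] ℂ, Tendsto (fun n ↦ φ (g n)) atTop (𝓝 0) := by
  obtain ⟨E, hE⟩ := exists_minimal_isClosedBoundary (A : Set C(K, ℂ))
  have hEinf : E.Infinite := IsClosedBoundary.infinite (V := A.toSubmodule) hE.prop hA
  obtain ⟨U, hU, hEU, hdisj⟩ := exists_seq_isOpen_pairwise_disjoint_inter hEinf
  obtain ⟨P, t, hP₀, hP₁, ht, hP⟩ := exists_seq_polynomial_norm_sub_eval_add_norm_eval_le_one
  choose q hq hpeak hoff using fun n ↦
    exists_peak_norm_eval_lt_of_minimal hE (hU n) (hEU n) (hP₀ n) (pow_pos one_half_pos n)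
  choose x hqx using hpeak
  have hg (n : ℕ) (y : K) : (aeval (q n) (P n) : C(K, ℂ)) y = (P n).eval ((q n : C(K, ℂ)) y) := by
    rw [aeval_subalgebra_coe, aeval_continuousMap_apply]
  have hthin (n : ℕ) (y : K) : ‖(t n : ℂ) - (aeval (q n) (P n) : C(K, ℂ)) y‖ +
      ‖(aeval (q n) (P n) : C(K, ℂ)) y‖ ≤ 1 := by
    rw [hg]
    exact hP n _ (((q n : C(K, ℂ)).norm_coe_le_norm y).trans (hq n))
  have hle (n : ℕ) (y : K) : ‖(aeval (q n) (P n) : C(K, ℂ)) y‖ ≤ 1 :=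
    (le_add_of_nonneg_left (norm_nonneg _)).trans (hthin n y)
  have hge (n : ℕ) : ‖(P n).eval 1‖ ≤ ‖aeval (q n) (P n)‖ := by
    rw [← hqx n, ← hg]
    exact (aeval (q n) (P n) : C(K, ℂ)).norm_coe_le_norm (x n)
  refine ⟨t, fun n ↦ aeval (q n) (P n), ht, ?_, hthin, fun φ ↦ ?_⟩
  · exact tendsto_of_tendsto_of_tendsto_of_le_of_le (by simpa using hP₁.norm) tendsto_const_nhds
      hge fun n ↦ (ContinuousMap.norm_le _ zero_le_one).2 (hle n)
  · have hsum : Summable fun n ↦ ‖φ (aeval (q n) (P n))‖ :=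
      hE.prop.summable_norm_apply hdisj hle summable_geometric_two (fun n ↦ by positivity)
        (fun n y hy ↦ by rw [hg]; exact (hoff n y hy).le) φ
    exact tendsto_zero_iff_norm_tendsto_zero.2 hsum.tendsto_atTop_zero

theorem stmt_4_general (A : Subalgebra ℂ C(K, ℂ)) (hAinf : ¬ FiniteDimensional ℂ A)
    {ι : Type*} [Finite ι] (ψ : ι → (A →L[ℂ] ℂ)) (δ : ι → ℝ) (hψ : ∀ i, ‖ψ i‖ = 1)
    (hδ : ∀ i, 0 < δ i) (ε : ℝ) (hε : 0 < ε) :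
    ∃ (f : ι → A) (g : A), ‖g‖ ≤ 1 ∧ 1 - ε < ‖g‖ ∧
      ∀ i,
        (‖f i‖ ≤ 1 ∧ 1 - δ i < (ψ i (f i)).re) ∧
        (‖f i + g‖ ≤ 1 ∧ 1 - δ i < (ψ i (f i + g)).re) ∧
        (‖f i - g‖ ≤ 1 ∧ 1 - δ i < (ψ i (f i - g)).re) := by
  choose f hf hfδ using fun i ↦ exists_norm_le_one_lt_re_apply (ψ i) (r := 1 - δ i)
    (by rw [hψ]; exact sub_lt_self 1 (hδ i))
  obtain ⟨t, g, ht, hgnorm, hthin, hweak⟩ := exists_seq_norm_sub_add_norm_le_one_weakly_null A hAinf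
  have hnorm (n : ℕ) (i : ι) (c : ℂ) (hc : ‖c‖ ≤ 1) :
      ‖(t n : ℂ) • f i - f i * g n + c • g n‖ ≤ 1 :=
    norm_smul_sub_mul_add_smul_le_one (hf i) hc (hthin n)
  have ht' : Tendsto (fun n ↦ (t n : ℂ)) atTop (𝓝 1) :=
    (Complex.continuous_ofReal.tendsto' 1 1 Complex.ofReal_one).comp ht
  have hslice (c : ℂ) : ∀ᶠ n in atTop, ∀ i,
      1 - δ i < (ψ i ((t n : ℂ) • f i - f i * g n + c • g n)).re :=
    eventually_all.2 fun i ↦ ((Complex.continuous_re.tendsto _).comp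
      (tendsto_apply_smul_sub_mul_add_smul ht' hweak (ψ i) (f i) c)).eventually_const_lt (hfδ i)
  obtain ⟨n, hn, h₀, h₁, h₂⟩ := ((hgnorm.eventually_const_lt (sub_lt_self 1 hε)).and
    ((hslice 0).and ((hslice 1).and (hslice (-1))))).exists
  refine ⟨fun i ↦ (t n : ℂ) • f i - f i * g n, g n, ?_, hn, fun i ↦ ⟨?_, ?_, ?_⟩⟩
  · exact (ContinuousMap.norm_le _ zero_le_one).2 fun x ↦
      (le_add_of_nonneg_left (norm_nonneg _)).trans (hthin n x)
  · simpa only [zero_smul, add_zero] using And.intro (hnorm n i 0 (by simp)) (h₀ i)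
  · simpa only [one_smul] using And.intro (hnorm n i 1 (by simp)) (h₁ i)
  · simpa only [neg_one_smul, ← sub_eq_add_neg] using And.intro (hnorm n i (-1) (by simp)) (h₂ i)

end SymmetricStrongDiameterTwo

/- STATEMENT 4: Every infinite-dimensional uniform algebra `A` on a compact Hausdorff
space `K` has the symmetric strong diameter two property: for any finitely many slices
`Sᵢ = {f ∈ B_A : Re ψᵢ(f) > 1 - δᵢ}` of the closed unit ball of `A` and any `ε > 0`,
there are `fᵢ ∈ Sᵢ` and `g ∈ B_A` with `fᵢ ± g ∈ Sᵢ` for all `i` and `‖g‖ > 1 - ε`. -/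
theorem stmt_4 {K : Type*} [TopologicalSpace K] [CompactSpace K] [T2Space K]
    (A : Subalgebra ℂ C(K, ℂ)) (hAclosed : IsClosed (A : Set C(K, ℂ)))
    (hAsep : ∀ s t : K, s ≠ t → ∃ f ∈ A, f s ≠ f t)
    (hAinf : ¬ FiniteDimensional ℂ A) :
    ∀ (n : ℕ) (ψ : Fin n → (A →L[ℂ] ℂ)) (δ : Fin n → ℝ),
      (∀ i, ‖ψ i‖ = 1) → (∀ i, 0 < δ i) → ∀ ε > (0 : ℝ),
      ∃ (f : Fin n → A) (g : A), ‖g‖ ≤ 1 ∧ 1 - ε < ‖g‖ ∧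
        ∀ i : Fin n,
          (‖f i‖ ≤ 1 ∧ 1 - δ i < (ψ i (f i)).re) ∧
          (‖f i + g‖ ≤ 1 ∧ 1 - δ i < (ψ i (f i + g)).re) ∧
          (‖f i - g‖ ≤ 1 ∧ 1 - δ i < (ψ i (f i - g)).re) :=
  fun _ ψ δ hψ hδ ε hε ↦ stmt_4_general A hAinf ψ δ hψ hδ ε hε
end

section
/- Let X be a nontrivial complex Banach space (X ≠ {0}) and let C_b(B_X) denote the Banach algebra of all bounded continuous complex-valued functions on the closed unit ball B_X of X, with the supremum norm. Then C_b(B_X) has the symmetric strong diameter two property: for every n ∈ ℕ, every finite family of slices S₁,…,Sₙ of the closed unit ball of C_b(B_X) and every ε > 0, there exist f_i ∈ S_i (i = 1,…,n) and g in the closed unit ball of C_b(B_X) such that f_i ± g ∈ S_i for every i and ‖g‖_∞ > 1 − ε. -/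
open BoundedContinuousFunction

set_option maxHeartbeats 1000000
set_option synthInstance.maxHeartbeats 1000000

/-! Multiplying `h` by `1 - b` for a function `b : K → [0, 1]` leaves room for `± b`: the values of
`h * (1 - b) ± b` are convex combinations of values of `h` and `± 1`, so stay in the unit disc.
An infinite Hausdorff space contains infinitely many disjoint nonempty open sets; bumps `b k` with
`‖b k‖ = 1` supported in them span a copy of `c₀`, so `b k` and `h * b k` tend weakly to `0`, and
for large `k` the functions `h * (1 - b k) ± b k` lie in any prescribed slice containing `h`. -/

section

open Filter Topology Function

section NormedSpace

variable {𝕜 Z : Type*} [RCLike 𝕜] [NormedAddCommGroup Z] [NormedSpace 𝕜 Z]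

/-- The slice `S(φ, δ)` of the closed unit ball of `Z`; the normalization `‖φ‖ = 1` is not part of
the definition and is imposed where slices are quantified over. -/
def unitBallSlice (φ : Z →L[𝕜] 𝕜) (δ : ℝ) : Set Z :=
  {z | ‖z‖ ≤ 1 ∧ 1 - δ < RCLike.re (φ z)}

variable (𝕜 Z) in
/-- The symmetric strong diameter two property (SSD2P): in any finitely many slices of the unit
ball one finds points `f i` such that each segment `[f i - g, f i + g]` stays in its slice, for a
common `g` in the unit ball of norm arbitrarily close to `1`. -/
def SymmetricStrongDiameterTwoProperty : Prop :=
  ∀ (n : ℕ) (φ : Fin n → (Z →L[𝕜] 𝕜)) (δ : Fin n → ℝ),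
    (∀ i, ‖φ i‖ = 1) → (∀ i, 0 < δ i) → ∀ ε > (0 : ℝ),
    ∃ (f : Fin n → Z) (g : Z), ‖g‖ ≤ 1 ∧ 1 - ε < ‖g‖ ∧
      ∀ i, f i ∈ unitBallSlice (φ i) (δ i) ∧
        f i + g ∈ unitBallSlice (φ i) (δ i) ∧ f i - g ∈ unitBallSlice (φ i) (δ i)

lemma unitBallSlice_nonempty {φ : Z →L[𝕜] 𝕜} {δ : ℝ} (hφ : 1 - δ < ‖φ‖) :
    (unitBallSlice φ δ).Nonempty := by
  obtain ⟨z, hz, hφz⟩ := φ.exists_lt_apply_of_lt_opNorm hφ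
  obtain ⟨c, hc, hcz⟩ := RCLike.exists_norm_eq_mul_self (φ z)
  refine ⟨c • z, ?_, ?_⟩
  · rw [norm_smul, hc, one_mul]
    exact hz.le
  · rwa [map_smul, smul_eq_mul, ← hcz, RCLike.ofReal_re]

lemma mem_unitBallSlice_of_add_of_sub {φ : Z →L[𝕜] 𝕜} {δ : ℝ} {f g : Z}
    (hadd : f + g ∈ unitBallSlice φ δ) (hsub : f - g ∈ unitBallSlice φ δ) :
    f ∈ unitBallSlice φ δ := by
  obtain ⟨hadd_norm, hadd_re⟩ := hadd
  obtain ⟨hsub_norm, hsub_re⟩ := hsub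
  constructor
  · have two_mul_norm_le : 2 * ‖f‖ ≤ 2 :=
      calc 2 * ‖f‖ = ‖(2 : 𝕜) • f‖ := by rw [norm_smul, RCLike.norm_ofNat]
        _ = ‖(f + g) + (f - g)‖ := by rw [two_smul, add_add_sub_cancel]
        _ ≤ 2 := (norm_add_le _ _).trans (by linarith)
    linarith
  · simp only [map_add, map_sub] at hadd_re hsub_re
    linarith

lemma eventually_mem_unitBallSlice {ι : Type*} {l : Filter ι} {φ : Z →L[𝕜] 𝕜}
    {δ : ℝ} {u : ι → Z} {z : Z} (h : Tendsto (fun k => φ (u k)) l (𝓝 (φ z)))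
    (hu : ∀ k, ‖u k‖ ≤ 1) (hz : z ∈ unitBallSlice φ δ) :
    ∀ᶠ k in l, u k ∈ unitBallSlice φ δ :=
  (((RCLike.continuous_re.tendsto _).comp h).eventually_const_lt hz.2).mono
    fun k hk => ⟨hu k, hk⟩

theorem symmetricStrongDiameterTwoProperty_of_weak_approx
    (H : ∀ (n : ℕ) (h : Fin n → Z), (∀ i, ‖h i‖ ≤ 1) →
      ∃ (f : Fin n → ℕ → Z) (g : ℕ → Z),
        (∀ k, ‖g k‖ ≤ 1) ∧ Tendsto (fun k => ‖g k‖) atTop (𝓝 1) ∧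
        (∀ i k, ‖f i k + g k‖ ≤ 1 ∧ ‖f i k - g k‖ ≤ 1) ∧
        ∀ φ : Z →L[𝕜] 𝕜, Tendsto (fun k => φ (g k)) atTop (𝓝 0) ∧
          ∀ i, Tendsto (fun k => φ (f i k)) atTop (𝓝 (φ (h i)))) :
    SymmetricStrongDiameterTwoProperty 𝕜 Z := by
  intro n φ δ hφ hδ ε hε
  have slice_nonempty (i : Fin n) : (unitBallSlice (φ i) (δ i)).Nonempty :=
    unitBallSlice_nonempty (by linarith [hφ i, hδ i])
  choose h hh using slice_nonempty
  obtain ⟨f, g, hg, hg_norm, hfg, hweak⟩ := H n h fun i => (hh i).1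
  have eventually_mem (i : Fin n) : ∀ᶠ k in atTop,
      f i k + g k ∈ unitBallSlice (φ i) (δ i) ∧ f i k - g k ∈ unitBallSlice (φ i) (δ i) := by
    obtain ⟨hg_weak, hf_weak⟩ := hweak (φ i)
    have hadd : Tendsto (fun k => φ i (f i k + g k)) atTop (𝓝 (φ i (h i))) := by
      simpa only [map_add, add_zero] using (hf_weak i).add hg_weak
    have hsub : Tendsto (fun k => φ i (f i k - g k)) atTop (𝓝 (φ i (h i))) := by
      simpa only [map_sub, sub_zero] using (hf_weak i).sub hg_weak
    exact (eventually_mem_unitBallSlice hadd (fun k => (hfg i k).1) (hh i)).and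
      (eventually_mem_unitBallSlice hsub (fun k => (hfg i k).2) (hh i))
  obtain ⟨k, hk_mem, hk_norm⟩ := ((eventually_all.2 eventually_mem).and
    (hg_norm.eventually_const_lt (show 1 - ε < 1 by linarith))).exists
  exact ⟨fun i => f i k, g k, hg k, hk_norm, fun i =>
    ⟨mem_unitBallSlice_of_add_of_sub (hk_mem i).1 (hk_mem i).2, hk_mem i⟩⟩

lemma summable_norm_apply_of_norm_sum_smul_le_s5 {ι : Type*} {u : ι → Z} {C : ℝ}
    (hu : ∀ (s : Finset ι) (c : ι → 𝕜), (∀ k, ‖c k‖ ≤ 1) → ‖∑ k ∈ s, c k • u k‖ ≤ C)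
    (φ : Z →L[𝕜] 𝕜) : Summable fun k => ‖φ (u k)‖ := by
  choose c hc hcφ using fun k => RCLike.exists_norm_eq_mul_self (φ (u k))
  refine summable_of_sum_le (c := ‖φ‖ * C) (fun _ => norm_nonneg _) fun s => ?_
  have apply_sum : φ (∑ k ∈ s, c k • u k) = ((∑ k ∈ s, ‖φ (u k)‖ : ℝ) : 𝕜) := by
    simp only [map_sum, map_smul, smul_eq_mul, hcφ]
  calc ∑ k ∈ s, ‖φ (u k)‖ = ‖φ (∑ k ∈ s, c k • u k)‖ := by
        rw [apply_sum, RCLike.norm_of_nonneg (Finset.sum_nonneg fun _ _ => norm_nonneg _)]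
    _ ≤ ‖φ‖ * C := φ.le_opNorm_of_le (hu s c fun k => (hc k).le)

end NormedSpace

section BoundedContinuousFunction

variable {𝕜 K : Type*} [RCLike 𝕜] [TopologicalSpace K]

lemma norm_sum_le_of_pairwise_disjoint_support {E ι : Type*} [SeminormedAddCommGroup E]
    {u : ι → K →ᵇ E} {C : ℝ} (hC : 0 ≤ C) (hu : ∀ k, ‖u k‖ ≤ C)
    (hdisj : Pairwise (Disjoint on fun k => support (u k))) (s : Finset ι) :
    ‖∑ k ∈ s, u k‖ ≤ C := by
  refine (BoundedContinuousFunction.norm_le hC).2 fun x => ?_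
  rw [BoundedContinuousFunction.coe_sum, Finset.sum_apply]
  by_cases hx : ∃ k ∈ s, u k x ≠ 0
  · obtain ⟨k, hks, hkx⟩ := hx
    have eq_zero_of_ne : ∀ j ∈ s, j ≠ k → u j x = 0 := fun j _ hjk =>
      notMem_support.1 fun hjx => Set.disjoint_left.1 (hdisj hjk) hjx hkx
    rw [Finset.sum_eq_single_of_mem k hks eq_zero_of_ne]
    exact ((u k).norm_coe_le_norm x).trans (hu k)
  · push Not at hx
    rwa [Finset.sum_eq_zero hx, norm_zero]

lemma tendsto_apply_zero_of_pairwise_disjoint_support {E : Type*} [NormedAddCommGroup E]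
    [NormedSpace 𝕜 E] {u : ℕ → K →ᵇ E} {C : ℝ} (hu : ∀ k, ‖u k‖ ≤ C)
    (hdisj : Pairwise (Disjoint on fun k => support (u k))) (φ : (K →ᵇ E) →L[𝕜] 𝕜) :
    Tendsto (fun k => φ (u k)) atTop (𝓝 0) := by
  have hC : 0 ≤ C := (norm_nonneg _).trans (hu 0)
  refine tendsto_zero_iff_norm_tendsto_zero.2
    (summable_norm_apply_of_norm_sum_smul_le_s5 (C := C) (fun s c hc => ?_) φ).tendsto_atTop_zero
  refine norm_sum_le_of_pairwise_disjoint_support hC (fun k => ?_) (fun j k hjk => ?_) s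
  · rw [norm_smul]
    exact (mul_le_of_le_one_left (norm_nonneg _) (hc k)).trans (hu k)
  · exact (hdisj hjk).mono (support_const_smul_subset _ _) (support_const_smul_subset _ _)

-- The identity `‖1 - b x‖ + ‖b x‖ = 1` says that `b x` is a real number in `[0, 1]`.
lemma exists_bump_of_isOpen [CompletelyRegularSpace K] {U : Set K} (hU : IsOpen U)
    (hne : U.Nonempty) :
    ∃ b : K →ᵇ 𝕜, ‖b‖ = 1 ∧ (∀ x, ‖1 - b x‖ + ‖b x‖ = 1) ∧ support b ⊆ U := by
  obtain ⟨x₀, hx₀⟩ := hne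
  obtain ⟨p, hp, hpx₀, hpU⟩ := CompletelyRegularSpace.completely_regular_isOpen x₀ U hU hx₀
  have norm_coe (x : K) : ‖((1 - p x : ℝ) : 𝕜)‖ = 1 - p x :=
    RCLike.norm_of_nonneg (sub_nonneg.2 (p x).2.2)
  let b : K →ᵇ 𝕜 := BoundedContinuousFunction.ofNormedAddCommGroup
    (fun x => ((1 - p x : ℝ) : 𝕜)) (by fun_prop) 1
    fun x => (norm_coe x).trans_le (sub_le_self _ (p x).2.1)
  have b_apply (x : K) : b x = ((1 - p x : ℝ) : 𝕜) := rfl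
  refine ⟨b, le_antisymm ?_ ?_, fun x => ?_, fun x hx => ?_⟩
  · exact BoundedContinuousFunction.norm_ofNormedAddCommGroup_le _ zero_le_one _
  · calc 1 = ‖b x₀‖ := by simp [b_apply, hpx₀]
      _ ≤ ‖b‖ := b.norm_coe_le_norm x₀
  · have one_sub_b : 1 - b x = ((p x : ℝ) : 𝕜) := by rw [b_apply]; push_cast; ring
    rw [one_sub_b, b_apply, norm_coe, RCLike.norm_of_nonneg (p x).2.1, add_sub_cancel]
  · by_contra hxU
    exact hx (by simp [b_apply, hpU hxU])

lemma exists_seq_bump_pairwise_disjoint_support (𝕜 K : Type*) [RCLike 𝕜] [TopologicalSpace K]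
    [T35Space K] [Infinite K] :
    ∃ b : ℕ → K →ᵇ 𝕜, (∀ k, ‖b k‖ = 1) ∧ (∀ k x, ‖1 - b k x‖ + ‖b k x‖ = 1) ∧
      Pairwise (Disjoint on fun k => support (b k)) := by
  obtain ⟨U, hU_inf, hU_open, hdisj⟩ := exists_seq_infinite_isOpen_pairwise_disjoint K
  choose b hb_norm hb hbU using fun k =>
    exists_bump_of_isOpen (𝕜 := 𝕜) (hU_open k) (hU_inf k).nonempty
  exact ⟨b, hb_norm, hb, fun j k hjk => (hdisj hjk).mono (hbU j) (hbU k)⟩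

lemma norm_sub_mul_add_smul_le_one {h b : K →ᵇ 𝕜} (hh : ‖h‖ ≤ 1)
    (hb : ∀ x, ‖1 - b x‖ + ‖b x‖ = 1) {c : 𝕜} (hc : ‖c‖ ≤ 1) :
    ‖h - h * b + c • b‖ ≤ 1 := by
  refine (BoundedContinuousFunction.norm_le zero_le_one).2 fun x => ?_
  calc ‖(h - h * b + c • b) x‖ = ‖h x * (1 - b x) + c * b x‖ := by
        simp [mul_sub]
    _ ≤ ‖h x‖ * ‖1 - b x‖ + ‖c‖ * ‖b x‖ := by
        simpa only [norm_mul] using norm_add_le (h x * (1 - b x)) (c * b x)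
    _ ≤ 1 * ‖1 - b x‖ + 1 * ‖b x‖ := by
        gcongr
        exact (h.norm_coe_le_norm x).trans hh
    _ = 1 := by rw [one_mul, one_mul, hb]

theorem stmt_5_general (𝕜 K : Type*) [RCLike 𝕜] [TopologicalSpace K] [T35Space K] [Infinite K] :
    SymmetricStrongDiameterTwoProperty 𝕜 (K →ᵇ 𝕜) := by
  obtain ⟨b, hb_norm, hb, hdisj⟩ := exists_seq_bump_pairwise_disjoint_support 𝕜 K
  refine symmetricStrongDiameterTwoProperty_of_weak_approx fun n h hh =>
    ⟨fun i k => h i - h i * b k, b, fun k => (hb_norm k).le, ?_, fun i k => ⟨?_, ?_⟩,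
      fun φ => ⟨?_, fun i => ?_⟩⟩
  · simp only [hb_norm, tendsto_const_nhds]
  · simpa only [one_smul] using norm_sub_mul_add_smul_le_one (hh i) (hb k) (c := 1) norm_one.le
  · simpa only [neg_smul, one_smul, ← sub_eq_add_neg] using
      norm_sub_mul_add_smul_le_one (hh i) (hb k) (c := -1) (by rw [norm_neg, norm_one])
  · exact tendsto_apply_zero_of_pairwise_disjoint_support (fun k => (hb_norm k).le) hdisj φ
  · have mul_weakly_null : Tendsto (fun k => φ (h i * b k)) atTop (𝓝 0) := by
      refine tendsto_apply_zero_of_pairwise_disjoint_support (C := 1) (fun k => ?_)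
        (fun j k hjk => (hdisj hjk).mono ?_ ?_) φ
      · exact (norm_mul_le _ _).trans (mul_le_one₀ (hh i) (norm_nonneg _) (hb_norm k).le)
      all_goals exact support_mul_subset_right _ _
    simpa only [map_sub, sub_zero] using mul_weakly_null.const_sub (φ (h i))

end BoundedContinuousFunction

lemma infinite_closedBall (𝕜 : Type*) {X : Type*} [NontriviallyNormedField 𝕜]
    [NormedAddCommGroup X] [NormedSpace 𝕜 X] [Nontrivial X] (x : X) {r : ℝ} (hr : 0 < r) :
    (Metric.closedBall x r).Infinite := by
  have := Module.punctured_nhds_neBot 𝕜 X x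
  exact infinite_of_mem_nhds x (Metric.closedBall_mem_nhds x hr)

end

/- STATEMENT 5: For a nontrivial complex Banach space `X`, the Banach algebra
`C_b(B_X)` of bounded continuous complex-valued functions on the closed unit ball
of `X` has the symmetric strong diameter two property. -/
theorem stmt_5 {X : Type*} [NormedAddCommGroup X] [NormedSpace ℂ X] [CompleteSpace X]
    [Nontrivial X] :
    ∀ (n : ℕ)
      (ψ : Fin n → ((↥(Metric.closedBall (0 : X) 1) →ᵇ ℂ) →L[ℂ] ℂ)) (δ : Fin n → ℝ),
      (∀ i, ‖ψ i‖ = 1) → (∀ i, 0 < δ i) → ∀ ε > (0 : ℝ),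
      ∃ (f : Fin n → (↥(Metric.closedBall (0 : X) 1) →ᵇ ℂ))
        (g : ↥(Metric.closedBall (0 : X) 1) →ᵇ ℂ), ‖g‖ ≤ 1 ∧ 1 - ε < ‖g‖ ∧
        ∀ i : Fin n,
          (‖f i‖ ≤ 1 ∧ 1 - δ i < (ψ i (f i)).re) ∧
          (‖f i + g‖ ≤ 1 ∧ 1 - δ i < (ψ i (f i + g)).re) ∧
          (‖f i - g‖ ≤ 1 ∧ 1 - δ i < (ψ i (f i - g)).re) := by
  have := (infinite_closedBall ℂ (0 : X) one_pos).to_subtype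
  exact stmt_5_general ℂ (Metric.closedBall (0 : X) 1)
end

section
/- Let X be a Banach space with the diameter two property. Then for any Banach space Y, the ℓ∞-direct sum X ⊕_∞ Y (the product X × Y with norm ‖(x,y)‖ = max{‖x‖,‖y‖}) has the diameter two property. -/
set_option maxHeartbeats 1000000
set_option synthInstance.maxHeartbeats 1000000

/-- A (real) Banach space `E` has the diameter two property: every nonempty relatively
weakly open subset of the closed unit ball has diameter two. -/
def HasDiameterTwoProperty (E : Type*) [NormedAddCommGroup E] [NormedSpace ℝ E] : Prop :=
  ∀ W : Set (WeakSpace ℝ E), IsOpen W →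
    ((⇑(toWeakSpace ℝ E) ⁻¹' W) ∩ Metric.closedBall (0 : E) 1).Nonempty →
    Metric.diam ((⇑(toWeakSpace ℝ E) ⁻¹' W) ∩ Metric.closedBall (0 : E) 1) = 2

/-!
A weakly open set that meets the unit ball of `X ⊕_∞ Y` in a point `(x, y)` also meets it in the
horizontal slice `{(x', y) | ‖x'‖ ≤ 1}`. This slice is an isometric copy of the unit ball of `X`,
and the embedding `x' ↦ (x', y)`, being affine and continuous, is weakly continuous. So the
intersection contains an isometric copy of a nonempty relatively weakly open subset of the unit
ball of `X`, which has diameter two.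
-/

open Metric Set
open scoped ENNReal

section WeakContinuity

variable {𝕜 E F : Type*} [CommRing 𝕜] [TopologicalSpace 𝕜] [ContinuousAdd 𝕜]
  [ContinuousConstSMul 𝕜 𝕜]
  [AddCommGroup E] [Module 𝕜 E] [TopologicalSpace E] [IsTopologicalAddGroup E]
  [AddCommGroup F] [Module 𝕜 F] [TopologicalSpace F] [IsTopologicalAddGroup F]

theorem continuous_toWeakSpace_comp_affine_comp_symm (f : E →ᴬ[𝕜] F) :
    Continuous (toWeakSpace 𝕜 F ∘ f ∘ (toWeakSpace 𝕜 E).symm) := by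
  have f_eq_linear_add (x : E) : f x = f.contLinear x + f 0 := by
    simpa using f.map_vadd 0 x
  have eq_weakMap_add : toWeakSpace 𝕜 F ∘ f ∘ (toWeakSpace 𝕜 E).symm =
      fun x ↦ WeakSpace.map f.contLinear x + toWeakSpace 𝕜 F (f 0) := by
    ext x
    exact congrArg (toWeakSpace 𝕜 F) (f_eq_linear_add ((toWeakSpace 𝕜 E).symm x))
  rw [eq_weakMap_add]
  exact (WeakSpace.map f.contLinear).continuous.add continuous_const

end WeakContinuity

theorem HasDiameterTwoProperty.of_exists_affineIsometry {E F : Type*}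
    [NormedAddCommGroup E] [NormedSpace ℝ E] [NormedAddCommGroup F] [NormedSpace ℝ F]
    (hE : HasDiameterTwoProperty E)
    (h : ∀ z ∈ closedBall (0 : F) 1, ∃ f : E →ᵃⁱ[ℝ] F,
      MapsTo f (closedBall 0 1) (closedBall 0 1) ∧ z ∈ f '' closedBall 0 1) :
    HasDiameterTwoProperty F := by
  rintro W hW ⟨z, hzW, hz⟩
  obtain ⟨f, hf, x, hx, rfl⟩ := h z hz
  let V := (toWeakSpace ℝ F ∘ f ∘ (toWeakSpace ℝ E).symm) ⁻¹' W
  have isOpen_V : IsOpen V :=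
    hW.preimage (continuous_toWeakSpace_comp_affine_comp_symm f.toContinuousAffineMap)
  have diam_preimage : diam (toWeakSpace ℝ E ⁻¹' V ∩ closedBall 0 1) = 2 :=
    hE V isOpen_V ⟨x, hzW, hx⟩
  have image_subset : f '' (toWeakSpace ℝ E ⁻¹' V ∩ closedBall 0 1) ⊆
      toWeakSpace ℝ F ⁻¹' W ∩ closedBall 0 1 :=
    image_subset_iff.mpr fun _ hy ↦ ⟨hy.1, hf hy.2⟩
  apply le_antisymm
  · simpa using diam_le_of_subset_closedBall zero_le_one
      (inter_subset_right : toWeakSpace ℝ F ⁻¹' W ∩ closedBall 0 1 ⊆ _)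
  · calc
      2 = diam (f '' (toWeakSpace ℝ E ⁻¹' V ∩ closedBall 0 1)) := by
        rw [f.diam_image, diam_preimage]
      _ ≤ diam (toWeakSpace ℝ F ⁻¹' W ∩ closedBall 0 1) :=
        diam_mono image_subset (isBounded_closedBall.subset inter_subset_right)

section Slice

variable {E F : Type*} [SeminormedAddCommGroup E] [SeminormedAddCommGroup F]

/-- The horizontal slice `x ↦ (x, y)` of the `ℓᵖ`-direct sum `E ⊕ₚ F` through the height `y`,
as an affine isometry. -/
noncomputable def lpProdSlice (p : ℝ≥0∞) [Fact (1 ≤ p)] (𝕜 : Type*) [NormedField 𝕜]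
    [NormedSpace 𝕜 E] [NormedSpace 𝕜 F] (y : F) : E →ᵃⁱ[𝕜] WithLp p (E × F) where
  toFun x := WithLp.toLp p (x, y)
  linear := (WithLp.linearEquiv p 𝕜 (E × F)).symm ∘ₗ LinearMap.inl 𝕜 E F
  map_vadd' x v := (WithLp.equiv p (E × F)).injective (by simp)
  norm_map := WithLp.norm_toLp_fst p E F

theorem toLp_top_mem_closedBall_zero {r : ℝ} {x : E} {y : F} :
    WithLp.toLp ∞ (x, y) ∈ closedBall (0 : WithLp ∞ (E × F)) r ↔
      x ∈ closedBall 0 r ∧ y ∈ closedBall 0 r := by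
  simp only [mem_closedBall_zero_iff, WithLp.prod_norm_eq_sup, WithLp.toLp_fst,
    WithLp.toLp_snd, sup_le_iff]

end Slice

theorem stmt_6_general {X Y : Type*} [NormedAddCommGroup X] [NormedSpace ℝ X]
    [NormedAddCommGroup Y] [NormedSpace ℝ Y] (hX : HasDiameterTwoProperty X) :
    HasDiameterTwoProperty (WithLp ⊤ (X × Y)) := by
  refine hX.of_exists_affineIsometry fun z hz ↦ ?_
  obtain ⟨hx, hy⟩ := toLp_top_mem_closedBall_zero.mp hz
  exact ⟨lpProdSlice ∞ ℝ z.snd, fun _ hx' ↦ toLp_top_mem_closedBall_zero.mpr ⟨hx', hy⟩,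
    z.fst, hx, rfl⟩

/- STATEMENT 6: If a Banach space `X` has the diameter two property, then for any
Banach space `Y` the `ℓ∞`-direct sum `X ⊕_∞ Y` (i.e. `X × Y` with the max norm)
has the diameter two property. -/
theorem stmt_6 {X Y : Type*} [NormedAddCommGroup X] [NormedSpace ℝ X] [CompleteSpace X]
    [NormedAddCommGroup Y] [NormedSpace ℝ Y] [CompleteSpace Y]
    (hX : HasDiameterTwoProperty X) :
    HasDiameterTwoProperty (WithLp ⊤ (X × Y)) :=
  stmt_6_general hX
end

section
/- Let K be a compact Hausdorff space, X a nontrivial complex Banach space, and S an X-valued function space over a uniform algebra on K, i.e., a closed subspace S of C(K,X) such that the base algebra A := {x* ∘ f : f ∈ S, x* ∈ X*} is a uniform algebra on K and φ·f ∈ S for every φ ∈ A and f ∈ S. If the base algebra A is infinite-dimensional, then S has the diameter two property: every nonempty relatively weakly open subset of the closed unit ball B_S has diameter two. -/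
set_option maxHeartbeats 1000000
set_option synthInstance.maxHeartbeats 1000000

/-!
A closed infinite-dimensional algebra `A` of continuous functions contains some `p` with `‖p‖ ≤ 1`
such that `{t | p t = 1}` is not open. Indeed, if all these peak sets were open, their
characteristic functions would lie in `A` and countable intersections of them would be open as well,
so they would satisfy the descending chain condition, and splitting off smaller and smaller peak
sets would exhibit `A` as a finite sum of one-dimensional spaces.

For such `p`, the function `h n = (1 + n (1 - p))⁻¹` lies in `A`. The total variation of the
sequence `h n t` is bounded uniformly in `t`, so `h n • f` is weakly Cauchy for every `f ∈ S`, but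
if `f` does not vanish at a boundary point of `{t | p t = 1}`, then its differences
`(h a - h b) • f` stay bounded away from zero in norm for suitable large `a` and `b`. Hence for `f₀`
in the unit ball both `(1 - (h n - h m)) • f₀ ± (h a - h b) • f / ‖(h a - h b) • f‖` converge weakly
to `f₀` while their distance is two. Their norms have limit superior at most one when the indices
are chosen so that `1 - (h n - h m)` is small wherever `h a - h b` is not.
-/

open Filter Set Topology

section HalfPlane

open RCLike

variable {𝕜 : Type*} [RCLike 𝕜] {v w : 𝕜}

theorem one_le_norm_one_add (hw : 0 ≤ re w) : 1 ≤ ‖1 + w‖ :=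
  le_trans (by simpa using hw) (re_le_norm (1 + w))

theorem norm_le_norm_one_add (hw : 0 ≤ re w) : ‖w‖ ≤ ‖1 + w‖ := by
  rw [← sq_le_sq₀ (norm_nonneg _) (norm_nonneg _), norm_sq_eq_def, norm_sq_eq_def]
  simp only [map_add, one_re, one_im]
  nlinarith

theorem one_add_ne_zero_of_re_nonneg (hw : 0 ≤ re w) : 1 + w ≠ 0 :=
  norm_pos_iff.1 (one_pos.trans_le (one_le_norm_one_add hw))

theorem norm_inv_one_add_le_one (hw : 0 ≤ re w) : ‖(1 + w)⁻¹‖ ≤ 1 :=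
  norm_inv (1 + w) ▸ inv_le_one_of_one_le₀ (one_le_norm_one_add hw)

theorem norm_mul_norm_inv_one_add_le_one (hw : 0 ≤ re w) : ‖w‖ * ‖(1 + w)⁻¹‖ ≤ 1 := by
  rw [norm_inv, ← div_eq_mul_inv]
  exact div_le_one_of_le₀ (norm_le_norm_one_add hw) (norm_nonneg _)

theorem norm_one_sub_inv_one_add (hw : 0 ≤ re w) :
    ‖1 - (1 + w)⁻¹‖ = ‖w‖ * ‖(1 + w)⁻¹‖ := by
  have := one_add_ne_zero_of_re_nonneg hw
  rw [← norm_mul]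
  congr 1
  field_simp
  ring

theorem norm_inv_one_add_le (hw : 0 ≤ re w) : ‖(1 + w)⁻¹‖ ≤ 2 * (1 + ‖w‖)⁻¹ := by
  rw [← div_eq_mul_inv, le_div_iff₀ (by positivity)]
  linarith [norm_inv_one_add_le_one hw, norm_mul_norm_inv_one_add_le_one hw]

theorem norm_inv_one_add_mul_sub_inv_one_add_mul_le (hv : 0 ≤ re v) {s t : ℝ} (hs : 0 ≤ s)
    (hst : s ≤ t) :
    ‖(1 + (s : 𝕜) * v)⁻¹ - (1 + (t : 𝕜) * v)⁻¹‖ ≤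
      4 * ((1 + s * ‖v‖)⁻¹ - (1 + t * ‖v‖)⁻¹) := by
  have re_mul_nonneg {r : ℝ} (hr : 0 ≤ r) : 0 ≤ re ((r : 𝕜) * v) := by
    rw [re_ofReal_mul]; positivity
  have norm_inv_le {r : ℝ} (hr : 0 ≤ r) : ‖(1 + (r : 𝕜) * v)⁻¹‖ ≤ 2 * (1 + r * ‖v‖)⁻¹ := by
    simpa [abs_of_nonneg hr] using norm_inv_one_add_le (re_mul_nonneg hr)
  have ht := hs.trans hst
  have hs₀ := one_add_ne_zero_of_re_nonneg (re_mul_nonneg hs)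
  have ht₀ := one_add_ne_zero_of_re_nonneg (re_mul_nonneg ht)
  calc ‖(1 + (s : 𝕜) * v)⁻¹ - (1 + (t : 𝕜) * v)⁻¹‖
      = (t - s) * ‖v‖ * (‖(1 + (s : 𝕜) * v)⁻¹‖ * ‖(1 + (t : 𝕜) * v)⁻¹‖) := by
        rw [inv_sub_inv hs₀ ht₀, add_sub_add_left_eq_sub, ← sub_mul, ← ofReal_sub, norm_div,
          norm_mul, norm_mul, norm_ofReal, abs_of_nonneg (sub_nonneg.2 hst), norm_inv, norm_inv,
          div_eq_mul_inv, mul_inv]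
    _ ≤ (t - s) * ‖v‖ * ((2 * (1 + s * ‖v‖)⁻¹) * (2 * (1 + t * ‖v‖)⁻¹)) := by
        have := sub_nonneg.2 hst
        gcongr
        exacts [norm_inv_le hs, norm_inv_le ht]
    _ = 4 * ((1 + s * ‖v‖)⁻¹ - (1 + t * ‖v‖)⁻¹) := by
        field_simp
        ring

end HalfPlane

section PeakApprox

variable {K 𝕜 : Type*} [TopologicalSpace K] [CompactSpace K] [RCLike 𝕜] {p : C(K, 𝕜)}

theorem re_natCast_mul_one_sub_apply_nonneg (hp : ‖p‖ ≤ 1) (n : ℕ) (t : K) :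
    0 ≤ RCLike.re ((n : 𝕜) * (1 - p t)) := by
  have : RCLike.re (p t) ≤ 1 := (RCLike.re_le_norm _).trans ((p.norm_coe_le_norm t).trans hp)
  rw [← RCLike.ofReal_natCast, RCLike.re_ofReal_mul, map_sub, RCLike.one_re]
  exact mul_nonneg n.cast_nonneg (sub_nonneg.2 this)

/-- The functions `(1 + n (1 - p))⁻¹`, which converge pointwise to the characteristic function of
the peak set `{t | p t = 1}` of a function `p` of norm at most one. -/
noncomputable def peakApprox (p : C(K, 𝕜)) (hp : ‖p‖ ≤ 1) (n : ℕ) : C(K, 𝕜) where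
  toFun t := (1 + n * (1 - p t))⁻¹
  continuous_toFun := Continuous.inv₀ (by fun_prop) fun t =>
    one_add_ne_zero_of_re_nonneg (re_natCast_mul_one_sub_apply_nonneg hp n t)

theorem peakApprox_apply (hp : ‖p‖ ≤ 1) (n : ℕ) (t : K) :
    peakApprox p hp n t = (1 + n * (1 - p t))⁻¹ :=
  rfl

theorem norm_peakApprox_apply_le_one (hp : ‖p‖ ≤ 1) (n : ℕ) (t : K) :
    ‖peakApprox p hp n t‖ ≤ 1 :=
  norm_inv_one_add_le_one (re_natCast_mul_one_sub_apply_nonneg hp n t)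

theorem mul_norm_peakApprox_apply_le_one (hp : ‖p‖ ≤ 1) (n : ℕ) (t : K) :
    n * ‖1 - p t‖ * ‖peakApprox p hp n t‖ ≤ 1 := by
  simpa [peakApprox_apply] using
    norm_mul_norm_inv_one_add_le_one (re_natCast_mul_one_sub_apply_nonneg hp n t)

theorem norm_one_sub_peakApprox_apply (hp : ‖p‖ ≤ 1) (n : ℕ) (t : K) :
    ‖1 - peakApprox p hp n t‖ = n * ‖1 - p t‖ * ‖peakApprox p hp n t‖ := by
  simpa [peakApprox_apply] using
    norm_one_sub_inv_one_add (re_natCast_mul_one_sub_apply_nonneg hp n t)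

theorem norm_one_sub_peakApprox_apply_le_one (hp : ‖p‖ ≤ 1) (n : ℕ) (t : K) :
    ‖1 - peakApprox p hp n t‖ ≤ 1 :=
  (norm_one_sub_peakApprox_apply hp n t).trans_le (mul_norm_peakApprox_apply_le_one hp n t)

theorem exists_pos_forall_norm_one_sub_peakApprox_apply_le (hp : ‖p‖ ≤ 1) (n : ℕ) {ε : ℝ}
    (hε : 0 < ε) :
    ∃ ρ > 0, ∀ t, ‖1 - p t‖ ≤ ρ → ‖1 - peakApprox p hp n t‖ ≤ ε := by
  refine ⟨ε / (n + 1), by positivity, fun t ht => ?_⟩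
  rw [le_div_iff₀ (by positivity)] at ht
  calc ‖1 - peakApprox p hp n t‖ ≤ n * ‖1 - p t‖ * 1 := by
        rw [norm_one_sub_peakApprox_apply]
        gcongr
        exact norm_peakApprox_apply_le_one hp n t
    _ ≤ ε := by linarith [norm_nonneg (1 - p t)]

theorem eventually_forall_norm_peakApprox_apply_le (hp : ‖p‖ ≤ 1) {ρ ε : ℝ} (hρ : 0 < ρ)
    (hε : 0 < ε) :
    ∀ᶠ n : ℕ in atTop, ∀ t, ρ ≤ ‖1 - p t‖ → ‖peakApprox p hp n t‖ ≤ ε := by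
  filter_upwards [tendsto_natCast_atTop_atTop.eventually_ge_atTop (1 / (ρ * ε)),
    eventually_gt_atTop 0] with n hn hn₀ t ht
  have hn₀' : (0 : ℝ) < n := by exact_mod_cast hn₀
  rw [div_le_iff₀ (by positivity)] at hn
  refine le_of_mul_le_mul_left ?_ (mul_pos hn₀' hρ)
  calc n * ρ * ‖peakApprox p hp n t‖ ≤ n * ‖1 - p t‖ * ‖peakApprox p hp n t‖ := by gcongr
    _ ≤ 1 := mul_norm_peakApprox_apply_le_one hp n t
    _ ≤ n * ρ * ε := by linarith

theorem tendsto_peakApprox_apply_of_ne_one (hp : ‖p‖ ≤ 1) {t : K} (ht : p t ≠ 1) :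
    Tendsto (fun n => peakApprox p hp n t) atTop (𝓝 0) := by
  refine Metric.nhds_basis_closedBall.tendsto_right_iff.2 fun ε hε => ?_
  filter_upwards [eventually_forall_norm_peakApprox_apply_le hp
    (norm_pos_iff.2 (sub_ne_zero.2 ht.symm)) hε] with n hn
  simpa using hn t le_rfl

theorem sum_norm_peakApprox_succ_sub_apply_le (hp : ‖p‖ ≤ 1) (N : ℕ) (t : K) :
    ∑ n ∈ Finset.range N, ‖(peakApprox p hp (n + 1) - peakApprox p hp n) t‖ ≤ 4 := by
  set g : ℕ → ℝ := fun n => (1 + n * ‖1 - p t‖)⁻¹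
  have re_nonneg : 0 ≤ RCLike.re (1 - p t) := by
    simpa using re_natCast_mul_one_sub_apply_nonneg hp 1 t
  calc ∑ n ∈ Finset.range N, ‖(peakApprox p hp (n + 1) - peakApprox p hp n) t‖
      ≤ ∑ n ∈ Finset.range N, 4 * (g n - g (n + 1)) := by
        refine Finset.sum_le_sum fun n _ => ?_
        rw [ContinuousMap.sub_apply, norm_sub_rev]
        simpa [g, peakApprox_apply] using norm_inv_one_add_mul_sub_inv_one_add_mul_le re_nonneg
          (n.cast_nonneg (α := ℝ)) (Nat.cast_le.2 n.le_succ)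
    _ = 4 * (1 - g N) := by
        rw [← Finset.mul_sum, Finset.sum_range_sub']
        simp [g]
    _ ≤ 4 := by
        have : 0 ≤ g N := by positivity
        linarith

end PeakApprox

section ClopenIndicator

open TopologicalSpace (Clopens)

variable {K 𝕜 : Type*} [TopologicalSpace K] [RCLike 𝕜] {A : Subalgebra 𝕜 C(K, 𝕜)}

/-- The characteristic function of a clopen set as a continuous function. -/
noncomputable def clopenIndicator (𝕜 : Type*) [RCLike 𝕜] (U : Clopens K) : C(K, 𝕜) :=
  LocallyConstant.charFn 𝕜 U.isClopen

theorem clopenIndicator_of_mem {U : Clopens K} {t : K} (ht : t ∈ U) :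
    clopenIndicator 𝕜 U t = 1 :=
  (LocallyConstant.charFn_eq_one 𝕜 t U.isClopen).2 ht

theorem clopenIndicator_of_notMem {U : Clopens K} {t : K} (ht : t ∉ U) :
    clopenIndicator 𝕜 U t = 0 :=
  (LocallyConstant.charFn_eq_zero 𝕜 t U.isClopen).2 ht

theorem clopenIndicator_eq_one_iff {U : Clopens K} {t : K} :
    clopenIndicator 𝕜 U t = 1 ↔ t ∈ U :=
  LocallyConstant.charFn_eq_one 𝕜 t U.isClopen

theorem clopenIndicator_top : clopenIndicator 𝕜 (⊤ : Clopens K) = 1 :=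
  ContinuousMap.ext fun t => clopenIndicator_of_mem (mem_univ t)

theorem clopenIndicator_add_clopenIndicator_sdiff {U V : Clopens K} (hVU : V ≤ U) :
    clopenIndicator 𝕜 V + clopenIndicator 𝕜 (U \ V) = clopenIndicator 𝕜 U := by
  ext t
  rw [ContinuousMap.add_apply]
  by_cases hV : t ∈ V
  · rw [clopenIndicator_of_mem hV, clopenIndicator_of_mem (hVU hV),
      clopenIndicator_of_notMem (show t ∉ U \ V from fun h => h.2 hV), add_zero]
  by_cases hU : t ∈ U
  · rw [clopenIndicator_of_notMem hV, clopenIndicator_of_mem hU,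
      clopenIndicator_of_mem (show t ∈ U \ V from ⟨hU, hV⟩), zero_add]
  · rw [clopenIndicator_of_notMem hV, clopenIndicator_of_notMem hU,
      clopenIndicator_of_notMem (show t ∉ U \ V from fun h => hU h.1), zero_add]

/-- The clopen sets whose characteristic functions belong to the algebra `A`. -/
def clopensIn (A : Subalgebra 𝕜 C(K, 𝕜)) : Set (Clopens K) :=
  {U | clopenIndicator 𝕜 U ∈ A}

theorem top_mem_clopensIn : ⊤ ∈ clopensIn A := by
  rw [clopensIn, mem_ofPred_eq, clopenIndicator_top]
  exact A.one_mem

theorem sdiff_mem_clopensIn {U V : Clopens K} (hU : U ∈ clopensIn A) (hV : V ∈ clopensIn A)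
    (hVU : V ≤ U) : U \ V ∈ clopensIn A := by
  rw [clopensIn, mem_ofPred_eq,
    eq_sub_of_add_eq' (clopenIndicator_add_clopenIndicator_sdiff (𝕜 := 𝕜) hVU)]
  exact A.sub_mem hU hV

end ClopenIndicator

section ClosedSubalgebra

open TopologicalSpace (Clopens)

variable {K 𝕜 : Type*} [TopologicalSpace K] [CompactSpace K] [RCLike 𝕜]
  {A : Subalgebra 𝕜 C(K, 𝕜)} {p : C(K, 𝕜)}

theorem peakApprox_mem (hA : IsClosed (A : Set C(K, 𝕜))) (hpA : p ∈ A) (hp : ‖p‖ ≤ 1) (n : ℕ) :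
    peakApprox p hp n ∈ A := by
  have hn : (n + 1 : 𝕜) ≠ 0 := n.cast_add_one_ne_zero
  set c : 𝕜 := n / (n + 1) with hc
  have norm_c_lt : ‖c‖ < 1 := by
    rw [hc, norm_div, RCLike.norm_natCast, ← Nat.cast_succ, RCLike.norm_natCast,
      div_lt_one (by positivity)]
    exact_mod_cast n.lt_succ_self
  have norm_smul_lt : ‖c • p‖ < 1 := by
    rw [norm_smul]
    exact mul_lt_one_of_nonneg_of_lt_one_left (norm_nonneg c) norm_c_lt hp
  have geom_mem : ∑' k, (c • p) ^ k ∈ A :=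
    tsum_mem hA fun k => A.pow_mem (A.smul_mem hpA c) k
  convert A.smul_mem geom_mem ((n + 1 : 𝕜)⁻¹) using 1
  ext t
  have geom_apply : (1 - c * p t) * (∑' k, (c • p) ^ k) t = 1 :=
    DFunLike.congr_fun (mul_neg_geom_series (c • p) norm_smul_lt) t
  have factor : 1 + n * (1 - p t) = (n + 1) * (1 - c * p t) := by
    rw [hc]
    field_simp
    ring
  rw [peakApprox_apply, factor, mul_inv, inv_eq_of_mul_eq_one_right geom_apply,
    ContinuousMap.smul_apply, smul_eq_mul]

theorem exists_pos_forall_le_norm_one_sub_apply (hopen : IsOpen {t | p t = 1}) :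
    ∃ ρ > 0, ∀ t, p t ≠ 1 → ρ ≤ ‖1 - p t‖ := by
  obtain h | h := {t | p t ≠ 1}.eq_empty_or_nonempty
  · exact ⟨1, one_pos, fun t ht => (h.subset ht).elim⟩
  · obtain ⟨t₀, ht₀, hmin⟩ := hopen.isClosed_compl.isCompact.exists_isMinOn h
      (f := fun t => ‖1 - p t‖) (by fun_prop)
    exact ⟨‖1 - p t₀‖, norm_pos_iff.2 (sub_ne_zero.2 (Ne.symm ht₀)), fun t ht => hmin ht⟩

theorem norm_clopenIndicator_le_one (U : Clopens K) : ‖clopenIndicator 𝕜 U‖ ≤ 1 := by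
  refine (ContinuousMap.norm_le _ zero_le_one).2 fun t => ?_
  by_cases ht : t ∈ U
  · simp [clopenIndicator_of_mem ht]
  · simp [clopenIndicator_of_notMem ht]

theorem exists_mem_clopensIn_coe_eq (hA : IsClosed (A : Set C(K, 𝕜))) (hpA : p ∈ A)
    (hp : ‖p‖ ≤ 1) (hopen : IsOpen {t | p t = 1}) :
    ∃ U ∈ clopensIn A, (U : Set K) = {t | p t = 1} := by
  let U : Clopens K := ⟨{t | p t = 1}, isClosed_eq p.continuous continuous_const, hopen⟩
  refine ⟨U, ?_, rfl⟩
  obtain ⟨ρ, hρ, hρ_le⟩ := exists_pos_forall_le_norm_one_sub_apply hopen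
  have peakApprox_tendsto :
      Tendsto (peakApprox p hp) atTop (𝓝 (clopenIndicator 𝕜 U)) := by
    refine Metric.nhds_basis_closedBall.tendsto_right_iff.2 fun ε hε => ?_
    filter_upwards [eventually_forall_norm_peakApprox_apply_le hp hρ hε] with n hn
    rw [mem_closedBall_iff_norm, ContinuousMap.norm_le _ hε.le]
    intro t
    rw [ContinuousMap.sub_apply]
    by_cases ht : p t = 1
    · rw [clopenIndicator_of_mem (show t ∈ U from ht), peakApprox_apply, ht]
      simpa using hε.le
    · rw [clopenIndicator_of_notMem (show t ∉ U from ht), sub_zero]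
      exact hn t (hρ_le t ht)
  exact hA.mem_of_tendsto peakApprox_tendsto (.of_forall fun n => peakApprox_mem hA hpA hp n)

theorem hasSum_ofReal_mul_one_iff {ι : Type*} {w : ι → ℝ} (hw : HasSum w 1)
    (hw_pos : ∀ i, 0 < w i) {z : ι → 𝕜} (hz : ∀ i, ‖z i‖ ≤ 1) :
    HasSum (fun i => (w i : 𝕜) * z i) 1 ↔ ∀ i, z i = 1 := by
  refine ⟨fun h i => ?_, fun h => by simpa [h] using RCLike.hasSum_ofReal 𝕜 |>.2 hw⟩
  have re_le (i : ι) : RCLike.re (z i) ≤ 1 := (RCLike.re_le_norm _).trans (hz i)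
  have defect : HasSum (fun i => w i * (1 - RCLike.re (z i))) 0 := by
    simpa [mul_sub] using hw.sub (RCLike.hasSum_re 𝕜 h)
  have defect_eq_zero := (hasSum_zero_iff_of_nonneg
    fun i => mul_nonneg (hw_pos i).le (sub_nonneg.2 (re_le i))).1 defect
  have re_eq : RCLike.re (z i) = 1 := by
    have := (mul_eq_zero.1 (congr_fun defect_eq_zero i)).resolve_left (hw_pos i).ne'
    linarith
  rw [← RCLike.re_eq_self_of_le ((hz i).trans_eq re_eq.symm), re_eq, RCLike.ofReal_one]

theorem exists_mem_setOf_eq_one_eq_iInter (hA : IsClosed (A : Set C(K, 𝕜))) {p : ℕ → C(K, 𝕜)}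
    (hpA : ∀ n, p n ∈ A) (hp : ∀ n, ‖p n‖ ≤ 1) :
    ∃ q ∈ A, ‖q‖ ≤ 1 ∧ {t | q t = 1} = ⋂ n, {t | p n t = 1} := by
  set w : ℕ → ℝ := fun n => 1 / 2 / 2 ^ n
  have w_pos (n : ℕ) : 0 < w n := by positivity
  have w_hasSum : HasSum w 1 := hasSum_geometric_two' 1
  have term_le (n : ℕ) : ‖(w n : 𝕜) • p n‖ ≤ w n := by
    rw [norm_smul, RCLike.norm_ofReal, abs_of_pos (w_pos n)]
    exact mul_le_of_le_one_right (w_pos n).le (hp n)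
  have hasSum_q : HasSum (fun n => (w n : 𝕜) • p n) (∑' n, (w n : 𝕜) • p n) :=
    (Summable.of_norm_bounded w_hasSum.summable term_le).hasSum
  refine ⟨∑' n, (w n : 𝕜) • p n, tsum_mem hA fun n => A.smul_mem (hpA n) _,
    tsum_of_norm_bounded w_hasSum term_le, Set.ext fun t => ?_⟩
  have hasSum_apply : HasSum (fun n => (w n : 𝕜) * p n t) ((∑' n, (w n : 𝕜) • p n) t) :=
    ContinuousMap.hasSum_apply hasSum_q t
  rw [mem_iInter, mem_ofPred_eq]
  refine Iff.trans ⟨fun h => h ▸ hasSum_apply, fun h => hasSum_apply.unique h⟩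
    (hasSum_ofReal_mul_one_iff w_hasSum w_pos fun n => ((p n).norm_coe_le_norm t).trans (hp n))

theorem wellFoundedLT_clopensIn (hA : IsClosed (A : Set C(K, 𝕜)))
    (hopen : ∀ p ∈ A, ‖p‖ ≤ 1 → IsOpen {t | p t = 1}) : WellFoundedLT (clopensIn A) := by
  refine ⟨RelEmbedding.wellFounded_iff_isEmpty.2 ⟨fun U => ?_⟩⟩
  have strictAnti : StrictAnti U := fun m n hmn => U.map_rel_iff.2 hmn
  obtain ⟨q, hqA, hq, hq_eq⟩ := exists_mem_setOf_eq_one_eq_iInter hA (fun n => (U n).2)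
    fun n => norm_clopenIndicator_le_one (U n).1
  have isOpen_iInter : IsOpen (⋂ n, ((U n).1 : Set K)) := by
    convert hopen q hqA hq
    simp only [hq_eq, clopenIndicator_eq_one_iff]
    rfl
  obtain ⟨n, hn⟩ := exists_subset_nhds_of_compactSpace
    (directed_of_isDirected_le fun m n hmn => (strictAnti.antitone hmn : (U n).1 ≤ (U m).1))
    (fun n => (U n).1.isClosed) fun t ht => isOpen_iInter.mem_nhds ht
  exact (strictAnti n.lt_succ_self).not_ge (hn.trans (iInter_subset _ (n + 1)))

theorem exists_mem_clopensIn_lt (hA : IsClosed (A : Set C(K, 𝕜)))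
    (hopen : ∀ p ∈ A, ‖p‖ ≤ 1 → IsOpen {t | p t = 1}) {U : Clopens K} (hU : U ∈ clopensIn A)
    {f : C(K, 𝕜)} (hf : f ∈ A)
    (hfU : clopenIndicator 𝕜 U * f ∉ Submodule.span 𝕜 {clopenIndicator 𝕜 U}) :
    ∃ V ∈ clopensIn A, V < U ∧ V ≠ ⊥ := by
  obtain ⟨t₁, ht₁⟩ : ∃ t₁, t₁ ∈ U := by
    by_contra! hempty
    have : clopenIndicator 𝕜 U = 0 :=
      ContinuousMap.ext fun t => clopenIndicator_of_notMem (hempty t)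
    simp [this] at hfU
  set g : C(K, 𝕜) := clopenIndicator 𝕜 U * f - f t₁ • clopenIndicator 𝕜 U with hg
  have g_ne_zero : g ≠ 0 := fun h =>
    hfU (sub_eq_zero.1 h ▸ Submodule.smul_mem _ _ (Submodule.mem_span_singleton_self _))
  have g_apply_eq_zero {t : K} (ht : t ∉ U) : g t = 0 := by
    simp [hg, clopenIndicator_of_notMem ht]
  have g_apply_t₁ : g t₁ = 0 := by simp [hg, clopenIndicator_of_mem ht₁]
  obtain ⟨t₀, -, hmax⟩ := isCompact_univ.exists_isMaxOn ⟨t₁, mem_univ t₁⟩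
    (f := fun t => ‖g t‖) (by fun_prop)
  have ht₀ : ‖g t₀‖ = ‖g‖ := (g.norm_coe_le_norm t₀).antisymm <|
    (g.norm_le (norm_nonneg _)).2 fun t => hmax (mem_univ t)
  have g_t₀_ne_zero : g t₀ ≠ 0 := by rwa [← norm_ne_zero_iff, ht₀, norm_ne_zero_iff]
  have hgA : (g t₀)⁻¹ • g ∈ A :=
    A.smul_mem (A.sub_mem (A.mul_mem hU hf) (A.smul_mem hU _)) _
  have norm_le_one : ‖(g t₀)⁻¹ • g‖ ≤ 1 := by
    rw [norm_smul, norm_inv, ht₀]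
    exact inv_mul_le_one
  obtain ⟨V, hV, hV_eq⟩ := exists_mem_clopensIn_coe_eq hA hgA norm_le_one
    (hopen _ hgA norm_le_one)
  have mem_V {t : K} : t ∈ V ↔ (g t₀)⁻¹ * g t = 1 := Set.ext_iff.1 hV_eq t
  have V_le_U : V ≤ U := fun t ht => by
    by_contra htU
    simpa [g_apply_eq_zero htU] using mem_V.1 ht
  have t₁_notMem : t₁ ∉ V := by simp [mem_V, g_apply_t₁]
  have V_ne_bot : V ≠ ⊥ := by
    rintro rfl
    exact mem_V.2 (inv_mul_cancel₀ g_t₀_ne_zero)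
  exact ⟨V, hV, V_le_U.lt_of_not_ge fun h => t₁_notMem (h ht₁), V_ne_bot⟩

theorem finiteDimensional_map_mulLeft_clopenIndicator (hA : IsClosed (A : Set C(K, 𝕜)))
    (hopen : ∀ p ∈ A, ‖p‖ ≤ 1 → IsOpen {t | p t = 1}) (U : clopensIn A) :
    FiniteDimensional 𝕜
      ((Subalgebra.toSubmodule A).map (LinearMap.mulLeft 𝕜 (clopenIndicator 𝕜 U.1))) := by
  have := wellFoundedLT_clopensIn hA hopen
  induction U using WellFoundedLT.induction with
  | ind U ih =>
  by_cases hspan : ∀ f ∈ A, clopenIndicator 𝕜 U.1 * f ∈ Submodule.span 𝕜 {clopenIndicator 𝕜 U.1}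
  · refine Submodule.finiteDimensional_of_le (S₂ := Submodule.span 𝕜 {clopenIndicator 𝕜 U.1}) ?_
    rintro _ ⟨f, hf, rfl⟩
    exact hspan f hf
  · push Not at hspan
    obtain ⟨f, hf, hfU⟩ := hspan
    obtain ⟨V, hV, hVU, hV_ne⟩ := exists_mem_clopensIn_lt hA hopen U.2 hf hfU
    have := ih ⟨V, hV⟩ hVU
    have := ih ⟨U.1 \ V, sdiff_mem_clopensIn U.2 hV hVU.le⟩ (sdiff_lt hVU.le hV_ne)
    refine Submodule.finiteDimensional_of_le
      (S₂ := (Subalgebra.toSubmodule A).map (LinearMap.mulLeft 𝕜 (clopenIndicator 𝕜 V)) ⊔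
        (Subalgebra.toSubmodule A).map (LinearMap.mulLeft 𝕜 (clopenIndicator 𝕜 (U.1 \ V)))) ?_
    rintro _ ⟨f, hf, rfl⟩
    rw [LinearMap.mulLeft_apply, ← clopenIndicator_add_clopenIndicator_sdiff hVU.le, add_mul]
    exact Submodule.add_mem_sup (Submodule.mem_map_of_mem hf) (Submodule.mem_map_of_mem hf)

theorem exists_mem_not_isOpen_setOf_eq_one (hA : IsClosed (A : Set C(K, 𝕜)))
    (hAinf : ¬ FiniteDimensional 𝕜 A) :
    ∃ p ∈ A, ‖p‖ ≤ 1 ∧ ¬ IsOpen {t | p t = 1} := by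
  by_contra! hopen
  have := finiteDimensional_map_mulLeft_clopenIndicator hA hopen ⟨⊤, top_mem_clopensIn⟩
  have map_eq : (Subalgebra.toSubmodule A).map (LinearMap.mulLeft 𝕜 (clopenIndicator 𝕜 ⊤)) =
      Subalgebra.toSubmodule A := by
    rw [clopenIndicator_top, LinearMap.mulLeft_one, Submodule.map_id]
  rw [map_eq] at this
  exact hAinf this

end ClosedSubalgebra

section WeakSpace

variable {𝕜 E ι : Type*} [RCLike 𝕜] [NormedAddCommGroup E] [NormedSpace 𝕜 E] {l : Filter ι}

theorem tendsto_toWeakSpace_iff {y : ι → E} {x : E} :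
    Tendsto (fun i => toWeakSpace 𝕜 E (y i)) l (𝓝 (toWeakSpace 𝕜 E x)) ↔
      ∀ Λ : E →L[𝕜] 𝕜, Tendsto (fun i => Λ (y i)) l (𝓝 (Λ x)) := by
  refine WeakBilin.tendsto_iff_forall_eval_tendsto (topDualPairing 𝕜 E).flip fun a b h => ?_
  by_contra hab
  obtain ⟨Λ, hΛ⟩ := SeparatingDual.exists_separating_of_ne (R := 𝕜) hab
  exact hΛ (DFunLike.congr_fun h Λ)

theorem tendsto_toWeakSpace_sub_of_cauchySeq {x : ℕ → E}
    (hx : ∀ Λ : E →L[𝕜] 𝕜, CauchySeq fun n => Λ (x n)) {i j : ι → ℕ}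
    (hi : Tendsto i l atTop) (hj : Tendsto j l atTop) :
    Tendsto (fun k => toWeakSpace 𝕜 E (x (i k) - x (j k))) l (𝓝 0) := by
  rw [← map_zero (toWeakSpace 𝕜 E), tendsto_toWeakSpace_iff]
  intro Λ
  have := (cauchySeq_iff_tendsto.1 (hx Λ)).comp
    (prod_atTop_atTop_eq (α := ℕ) (β := ℕ) ▸ hi.prodMk hj)
  rw [tendsto_uniformity_iff_dist_tendsto_zero] at this
  rw [map_zero, tendsto_zero_iff_norm_tendsto_zero]
  simpa [dist_eq_norm] using this

theorem tendsto_toWeakSpace_inv_norm_smul {w : ι → E} {c : ℝ} (hc : 0 < c) (hw : ∀ k, c ≤ ‖w k‖)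
    (hw_tendsto : Tendsto (fun k => toWeakSpace 𝕜 E (w k)) l (𝓝 0)) :
    Tendsto (fun k => toWeakSpace 𝕜 E ((‖w k‖⁻¹ : 𝕜) • w k)) l (𝓝 0) := by
  rw [← map_zero (toWeakSpace 𝕜 E), tendsto_toWeakSpace_iff] at hw_tendsto ⊢
  intro Λ
  rw [map_zero]
  refine squeeze_zero_norm (a := fun k => c⁻¹ * ‖Λ (w k)‖) (fun k => ?_) ?_
  · rw [map_smul, norm_smul, norm_inv, RCLike.norm_ofReal, abs_norm]
    gcongr
    exact hw k
  · simpa using (hw_tendsto Λ).norm.const_mul c⁻¹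

theorem summable_norm_apply_of_forall_norm_sum_smul_le {d : ℕ → E} {C : ℝ}
    (hd : ∀ (s : ℕ → 𝕜) (N : ℕ), (∀ n, ‖s n‖ ≤ 1) → ‖∑ n ∈ Finset.range N, s n • d n‖ ≤ C)
    (Λ : E →L[𝕜] 𝕜) : Summable fun n => ‖Λ (d n)‖ := by
  choose s norm_s hs using fun n => RCLike.exists_norm_eq_mul_self (Λ (d n))
  refine summable_of_sum_range_le (c := ‖Λ‖ * C) (fun n => norm_nonneg _) fun N => ?_
  have apply_sum : Λ (∑ n ∈ Finset.range N, s n • d n) =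
      ((∑ n ∈ Finset.range N, ‖Λ (d n)‖ : ℝ) : 𝕜) := by
    simp [hs]
  calc ∑ n ∈ Finset.range N, ‖Λ (d n)‖ = ‖Λ (∑ n ∈ Finset.range N, s n • d n)‖ := by
        rw [apply_sum, RCLike.norm_ofReal, abs_of_nonneg (by positivity)]
    _ ≤ ‖Λ‖ * ‖∑ n ∈ Finset.range N, s n • d n‖ := Λ.le_opNorm _
    _ ≤ ‖Λ‖ * C := by
        gcongr
        exact hd s N fun n => (norm_s n).le

theorem two_mul_inv_le_diam_of_norm_add_sub_le {V : Set E} {y u : E} {r : ℝ} (hr : 0 < r)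
    (hu : ‖u‖ = 1) (hadd : ‖y + u‖ ≤ r) (hsub : ‖y - u‖ ≤ r)
    (hadd_mem : (r⁻¹ : 𝕜) • (y + u) ∈ V) (hsub_mem : (r⁻¹ : 𝕜) • (y - u) ∈ V) :
    2 * r⁻¹ ≤ Metric.diam (V ∩ Metric.closedBall 0 1) := by
  have norm_inv_r : ‖(r⁻¹ : 𝕜)‖ = r⁻¹ := by
    rw [norm_inv, RCLike.norm_ofReal, abs_of_pos hr]
  have mem_closedBall {z : E} (hz : ‖z‖ ≤ r) : (r⁻¹ : 𝕜) • z ∈ Metric.closedBall 0 1 := by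
    rw [mem_closedBall_zero_iff, norm_smul, norm_inv_r, inv_mul_le_one₀ hr]
    exact hz
  refine le_of_eq_of_le ?_ (Metric.dist_le_diam_of_mem
    (Metric.isBounded_closedBall.subset inter_subset_right)
    ⟨hadd_mem, mem_closedBall hadd⟩ ⟨hsub_mem, mem_closedBall hsub⟩)
  rw [dist_eq_norm, ← smul_sub, add_sub_sub_cancel, ← two_smul 𝕜 u, norm_smul, norm_smul,
    norm_inv_r, hu, RCLike.norm_two]
  ring

theorem diam_preimage_toWeakSpace_inter_closedBall_eq_two [l.NeBot] {W : Set (WeakSpace 𝕜 E)}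
    (hW : IsOpen W) {x : E} (hx : toWeakSpace 𝕜 E x ∈ W) {y u : ι → E} {r : ι → ℝ}
    (hr : Tendsto r l (𝓝 1))
    (hy : Tendsto (fun i => toWeakSpace 𝕜 E (y i)) l (𝓝 (toWeakSpace 𝕜 E x)))
    (hu : Tendsto (fun i => toWeakSpace 𝕜 E (u i)) l (𝓝 0)) (norm_u : ∀ i, ‖u i‖ = 1)
    (hadd : ∀ i, ‖y i + u i‖ ≤ r i) (hsub : ∀ i, ‖y i - u i‖ ≤ r i) :
    Metric.diam (toWeakSpace 𝕜 E ⁻¹' W ∩ Metric.closedBall 0 1) = 2 := by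
  have hr_inv : Tendsto (fun i => ((r i : 𝕜))⁻¹) l (𝓝 1) := by
    simpa using ((RCLike.continuous_ofReal (K := 𝕜)).tendsto 1).comp hr |>.inv₀ (by simp)
  have eventually_mem {z : ι → E}
      (hz : Tendsto (fun i => toWeakSpace 𝕜 E (z i)) l (𝓝 (toWeakSpace 𝕜 E x))) :
      ∀ᶠ i in l, ((r i : 𝕜))⁻¹ • z i ∈ toWeakSpace 𝕜 E ⁻¹' W := by
    have := hr_inv.smul hz
    rw [one_smul] at this
    simpa only [mem_preimage, map_smul] using this.eventually_mem (hW.mem_nhds hx)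
  have two_mul_inv_tendsto : Tendsto (fun i => 2 * (r i)⁻¹) l (𝓝 2) := by
    simpa using (hr.inv₀ one_ne_zero).const_mul 2
  refine le_antisymm ?_ (le_of_tendsto two_mul_inv_tendsto ?_)
  · calc Metric.diam (toWeakSpace 𝕜 E ⁻¹' W ∩ Metric.closedBall 0 1)
        ≤ Metric.diam (Metric.closedBall (0 : E) 1) :=
          Metric.diam_mono inter_subset_right Metric.isBounded_closedBall
      _ ≤ 2 := by simpa using Metric.diam_closedBall (x := (0 : E)) zero_le_one
  · filter_upwards [eventually_mem (z := fun i => y i + u i) (by simpa using hy.add hu),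
      eventually_mem (z := fun i => y i - u i) (by simpa using hy.sub hu),
      hr.eventually_const_lt one_pos] with i hadd_mem hsub_mem hri
    exact two_mul_inv_le_diam_of_norm_add_sub_le hri (norm_u i) (hadd i) (hsub i) hadd_mem hsub_mem

end WeakSpace

section Cutoff

variable {K 𝕜 X : Type*} [TopologicalSpace K] [CompactSpace K] [RCLike 𝕜] [NormedAddCommGroup X]
  [NormedSpace 𝕜 X] {p : C(K, 𝕜)}

theorem eventually_lt_norm_peakApprox_sub_smul (hp : ‖p‖ ≤ 1) (f : C(K, X)) {t₀ : K}
    (ht₀ : p t₀ = 1) (hfreq : ∃ᶠ t in 𝓝 t₀, p t ≠ 1) {c : ℝ} (hc : c < ‖f t₀‖) (a : ℕ) :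
    ∀ᶠ b in atTop, c < ‖(peakApprox p hp a - peakApprox p hp b) • f‖ := by
  have lt_nhds : ∀ᶠ t in 𝓝 t₀, c < ‖peakApprox p hp a t • f t‖ := by
    have : Continuous fun t => ‖peakApprox p hp a t • f t‖ := by fun_prop
    refine this.continuousAt.eventually_const_lt ?_
    simpa [peakApprox_apply, ht₀] using hc
  obtain ⟨t, ht_ne, ht_lt⟩ := (hfreq.and_eventually lt_nhds).exists
  have tendsto_apply : Tendsto (fun b => ‖(peakApprox p hp a t - peakApprox p hp b t) • f t‖)
      atTop (𝓝 ‖peakApprox p hp a t • f t‖) := by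
    simpa using ((tendsto_peakApprox_apply_of_ne_one hp ht_ne).const_sub
      (peakApprox p hp a t)).smul_const (f t) |>.norm
  filter_upwards [tendsto_apply.eventually_const_lt ht_lt] with b hb
  exact hb.trans_le (((peakApprox p hp a - peakApprox p hp b) • f).norm_coe_le_norm t)

theorem eventually_forall_norm_peakApprox_sub_le_or (hp : ‖p‖ ≤ 1) (n : ℕ) {δ ε : ℝ} (hδ : 0 < δ)
    (hε : 0 < ε) :
    ∀ᶠ a in atTop, ∀ᶠ b in atTop, ∀ᶠ m in atTop, ∀ t,
      (‖(peakApprox p hp a - peakApprox p hp b) t‖ ≤ δ ∧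
        ‖(1 - (peakApprox p hp n - peakApprox p hp m)) t‖ ≤ 1 + ε) ∨
      ‖(1 - (peakApprox p hp n - peakApprox p hp m)) t‖ ≤ ε := by
  set h := peakApprox p hp
  -- Let `ρ` be so small that `h n` is near `1` where `‖1 - p‖ < ρ`; for large `a` and `b`, the
  -- difference `h a - h b` is small elsewhere. Likewise it is small where `‖1 - p‖` is tiny. In
  -- the zone between the two, both `1 - h n` and, for large `m`, `h m` are small.
  obtain ⟨ρ, hρ, one_sub_n_le⟩ :=
    exists_pos_forall_norm_one_sub_peakApprox_apply_le hp n (half_pos hε)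
  have small_off := eventually_forall_norm_peakApprox_apply_le hp hρ (half_pos hδ)
  filter_upwards [small_off] with a a_le
  filter_upwards [small_off] with b b_le
  obtain ⟨ρa, hρa, one_sub_a_le⟩ :=
    exists_pos_forall_norm_one_sub_peakApprox_apply_le hp a (half_pos hδ)
  obtain ⟨ρb, hρb, one_sub_b_le⟩ :=
    exists_pos_forall_norm_one_sub_peakApprox_apply_le hp b (half_pos hδ)
  filter_upwards [eventually_forall_norm_peakApprox_apply_le hp
    (lt_min hρ (lt_min hρa hρb)) (half_pos hε)] with m m_le t
  have norm_v_le : ‖(1 - (h n - h m)) t‖ ≤ ‖1 - h n t‖ + ‖h m t‖ := by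
    simpa [sub_add] using norm_add_le (1 - h n t) (h m t)
  have norm_u_le : ‖(h a - h b) t‖ ≤ ‖h a t‖ + ‖h b t‖ := norm_sub_le _ _
  have norm_u_le' : ‖(h a - h b) t‖ ≤ ‖1 - h a t‖ + ‖1 - h b t‖ := by
    simpa [norm_sub_rev] using norm_sub_le (1 - h b t) (1 - h a t) |>.trans_eq (add_comm _ _)
  obtain far | near := le_or_gt ρ ‖1 - p t‖
  · left
    have := norm_one_sub_peakApprox_apply_le_one hp n t
    have := m_le t ((min_le_left _ _).trans far)
    constructor <;> linarith [a_le t far, b_le t far]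
  have := one_sub_n_le t near.le
  obtain mid | close := le_or_gt (min ρa ρb) ‖1 - p t‖
  · right
    linarith [m_le t ((min_le_right _ _).trans mid)]
  · left
    have := one_sub_a_le t (close.le.trans (min_le_left _ _))
    have := one_sub_b_le t (close.le.trans (min_le_right _ _))
    have := norm_peakApprox_apply_le_one hp m t
    constructor <;> linarith

theorem norm_smul_add_le_of_forall_or {v : C(K, 𝕜)} {f g : C(K, X)} {ε : ℝ} (hε : 0 ≤ ε)
    (hf : ‖f‖ ≤ 1) (hg : ‖g‖ ≤ 1) (h : ∀ t, (‖g t‖ ≤ ε ∧ ‖v t‖ ≤ 1 + ε) ∨ ‖v t‖ ≤ ε) :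
    ‖v • f + g‖ ≤ 1 + 2 * ε := by
  refine (ContinuousMap.norm_le _ (by positivity)).2 fun t => ?_
  have norm_vf_le : ‖(v • f) t‖ ≤ ‖v t‖ := by
    simpa [norm_smul] using
      mul_le_of_le_one_right (norm_nonneg (v t)) ((f.norm_coe_le_norm t).trans hf)
  have := norm_add_le ((v • f) t) (g t)
  have := (g.norm_coe_le_norm t).trans hg
  rw [ContinuousMap.add_apply]
  obtain ⟨_, _⟩ | _ := h t <;> linarith

theorem norm_smul_sub_le_of_forall_or {v : C(K, 𝕜)} {f g : C(K, X)} {ε : ℝ} (hε : 0 ≤ ε)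
    (hf : ‖f‖ ≤ 1) (hg : ‖g‖ ≤ 1) (h : ∀ t, (‖g t‖ ≤ ε ∧ ‖v t‖ ≤ 1 + ε) ∨ ‖v t‖ ≤ ε) :
    ‖v • f - g‖ ≤ 1 + 2 * ε := by
  rw [sub_eq_add_neg]
  exact norm_smul_add_le_of_forall_or hε hf ((norm_neg g).trans_le hg) (by simpa using h)

theorem exists_peakApprox_norm_smul_add_sub_le (hp : ‖p‖ ≤ 1) {f₀ f : C(K, X)} (hf₀ : ‖f₀‖ ≤ 1)
    {t₀ : K} (ht₀ : p t₀ = 1) (hfreq : ∃ᶠ t in 𝓝 t₀, p t ≠ 1) {c : ℝ} (hc : 0 < c)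
    (hcf : c < ‖f t₀‖) {ε : ℝ} (hε : 0 < ε) (n : ℕ) :
    ∃ a ≥ n, ∃ b ≥ n, ∃ m ≥ n,
      let v := 1 - (peakApprox p hp n - peakApprox p hp m)
      let u := (peakApprox p hp a - peakApprox p hp b) • f
      c ≤ ‖u‖ ∧ ‖v • f₀ + (‖u‖⁻¹ : 𝕜) • u‖ ≤ 1 + 2 * ε ∧
        ‖v • f₀ - (‖u‖⁻¹ : 𝕜) • u‖ ≤ 1 + 2 * ε := by
  have norm_f_pos : 0 < ‖f‖ := (hc.trans hcf).trans_le (f.norm_coe_le_norm t₀)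
  obtain ⟨a, dichotomy, ha⟩ := ((eventually_forall_norm_peakApprox_sub_le_or hp n
    (show 0 < ε * c / ‖f‖ by positivity) hε).and (eventually_ge_atTop n)).exists
  obtain ⟨b, dichotomy, lt_norm, hb⟩ := (dichotomy.and
    ((eventually_lt_norm_peakApprox_sub_smul hp f ht₀ hfreq hcf a).and
      (eventually_ge_atTop n))).exists
  obtain ⟨m, dichotomy, hm⟩ := (dichotomy.and (eventually_ge_atTop n)).exists
  refine ⟨a, ha, b, hb, m, hm, ?_⟩
  intro v u
  have norm_u_pos : 0 < ‖u‖ := hc.trans lt_norm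
  have norm_inv_smul (t : K) : ‖((‖u‖⁻¹ : 𝕜) • u) t‖ = ‖u‖⁻¹ * ‖u t‖ := by
    simp [norm_smul]
  have norm_le_one : ‖(‖u‖⁻¹ : 𝕜) • u‖ ≤ 1 := (norm_smul_inv_norm (norm_pos_iff.1 norm_u_pos)).le
  have zones (t : K) : (‖((‖u‖⁻¹ : 𝕜) • u) t‖ ≤ ε ∧ ‖v t‖ ≤ 1 + ε) ∨ ‖v t‖ ≤ ε := by
    refine (dichotomy t).imp_left (And.imp_left fun hδ => ?_)
    rw [norm_inv_smul, inv_mul_le_iff₀ norm_u_pos]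
    calc ‖u t‖ = ‖(peakApprox p hp a - peakApprox p hp b) t‖ * ‖f t‖ := norm_smul _ _
      _ ≤ ε * c / ‖f‖ * ‖f‖ := by
        gcongr
        exact f.norm_coe_le_norm t
      _ ≤ ‖u‖ * ε := by
        rw [div_mul_cancel₀ _ norm_f_pos.ne', mul_comm]
        gcongr
  exact ⟨lt_norm.le, norm_smul_add_le_of_forall_or hε.le hf₀ norm_le_one zones,
    norm_smul_sub_le_of_forall_or hε.le hf₀ norm_le_one zones⟩

theorem norm_sum_smul_peakApprox_succ_sub_smul_le (hp : ‖p‖ ≤ 1) (f : C(K, X)) {s : ℕ → 𝕜}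
    (hs : ∀ n, ‖s n‖ ≤ 1) (N : ℕ) :
    ‖∑ n ∈ Finset.range N, s n • (peakApprox p hp (n + 1) - peakApprox p hp n) • f‖ ≤
      4 * ‖f‖ := by
  refine (ContinuousMap.norm_le _ (by positivity)).2 fun t => ?_
  rw [ContinuousMap.sum_apply]
  calc ‖∑ n ∈ Finset.range N, (s n • (peakApprox p hp (n + 1) - peakApprox p hp n) • f) t‖
      ≤ ∑ n ∈ Finset.range N, ‖(peakApprox p hp (n + 1) - peakApprox p hp n) t‖ * ‖f‖ := by
        refine norm_sum_le_of_le _ fun n _ => ?_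
        rw [ContinuousMap.smul_apply, ContinuousMap.smul_apply', norm_smul, norm_smul]
        refine (mul_le_of_le_one_left (by positivity) (hs n)).trans ?_
        gcongr
        exact f.norm_coe_le_norm t
    _ ≤ 4 * ‖f‖ := by
        rw [← Finset.sum_mul]
        gcongr
        exact sum_norm_peakApprox_succ_sub_apply_le hp N t

theorem cauchySeq_apply_of_coe_eq_peakApprox_smul (hp : ‖p‖ ≤ 1) {S : Submodule 𝕜 C(K, X)}
    {f : C(K, X)} {F : ℕ → S} (hF : ∀ n, (F n : C(K, X)) = peakApprox p hp n • f)
    (Λ : S →L[𝕜] 𝕜) : CauchySeq fun n => Λ (F n) := by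
  have summable : Summable fun n => ‖Λ (F (n + 1) - F n)‖ := by
    refine summable_norm_apply_of_forall_norm_sum_smul_le (C := 4 * ‖f‖) (fun s N hs => ?_) Λ
    simpa [hF, sub_smul] using norm_sum_smul_peakApprox_succ_sub_smul_le hp f hs N
  refine cauchySeq_of_summable_dist (summable.congr fun n => ?_)
  rw [dist_comm, dist_eq_norm, map_sub]

theorem diam_eq_two_of_peakApprox_smul_mem (hp : ‖p‖ ≤ 1) {t₀ : K} (ht₀ : p t₀ = 1)
    (hfreq : ∃ᶠ t in 𝓝 t₀, p t ≠ 1) {S : Submodule 𝕜 C(K, X)}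
    (hS : ∀ n, ∀ f ∈ S, peakApprox p hp n • f ∈ S) {f : C(K, X)} (hf : f ∈ S) (hft₀ : f t₀ ≠ 0)
    {W : Set (WeakSpace 𝕜 S)} (hW : IsOpen W)
    (hne : (toWeakSpace 𝕜 S ⁻¹' W ∩ Metric.closedBall 0 1).Nonempty) :
    Metric.diam (toWeakSpace 𝕜 S ⁻¹' W ∩ Metric.closedBall 0 1) = 2 := by
  obtain ⟨f₀, hf₀W, hf₀⟩ := hne
  have norm_pos : 0 < ‖f t₀‖ := norm_pos_iff.2 hft₀
  choose a ha b hb m hm c_le hadd hsub using fun k : ℕ =>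
    exists_peakApprox_norm_smul_add_sub_le hp (mem_closedBall_zero_iff.1 hf₀) ht₀ hfreq
      (half_pos norm_pos) (half_lt_self norm_pos) (Nat.one_div_pos_of_nat (n := k)) k
  let F (n : ℕ) : S := ⟨peakApprox p hp n • f, hS n f hf⟩
  let F₀ (n : ℕ) : S := ⟨peakApprox p hp n • f₀.1, hS n f₀ f₀.2⟩
  let u (k : ℕ) : S := F (a k) - F (b k)
  let y (k : ℕ) : S := f₀ - (F₀ k - F₀ (m k))
  have coe_u (k : ℕ) :
      (u k : C(K, X)) = (peakApprox p hp (a k) - peakApprox p hp (b k)) • f :=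
    (sub_smul _ _ f).symm
  have coe_y (k : ℕ) :
      (y k : C(K, X)) = (1 - (peakApprox p hp k - peakApprox p hp (m k))) • f₀.1 := by
    rw [sub_smul, sub_smul, one_smul]
    rfl
  simp only [← coe_u, ← coe_y] at c_le hadd hsub
  have tendsto_of_ge {i : ℕ → ℕ} (hi : ∀ k, i k ≥ k) : Tendsto i atTop atTop :=
    tendsto_atTop_mono hi tendsto_id
  have tendsto_u : Tendsto (fun k => toWeakSpace 𝕜 S (u k)) atTop (𝓝 0) :=
    tendsto_toWeakSpace_sub_of_cauchySeq
      (cauchySeq_apply_of_coe_eq_peakApprox_smul hp fun n => rfl)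
      (tendsto_of_ge ha) (tendsto_of_ge hb)
  have tendsto_y : Tendsto (fun k => toWeakSpace 𝕜 S (y k)) atTop (𝓝 (toWeakSpace 𝕜 S f₀)) := by
    simpa [y] using (tendsto_toWeakSpace_sub_of_cauchySeq
      (cauchySeq_apply_of_coe_eq_peakApprox_smul hp fun n => (rfl : (F₀ n : C(K, X)) = _))
      tendsto_id (tendsto_of_ge hm)).const_sub (toWeakSpace 𝕜 S f₀)
  have tendsto_radius : Tendsto (fun k : ℕ => 1 + 2 * (1 / ((k : ℝ) + 1))) atTop (𝓝 1) := by
    simpa using (tendsto_one_div_add_atTop_nhds_zero_nat (𝕜 := ℝ)).const_mul 2 |>.const_add 1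
  refine diam_preimage_toWeakSpace_inter_closedBall_eq_two hW hf₀W tendsto_radius tendsto_y
    (tendsto_toWeakSpace_inv_norm_smul (half_pos norm_pos) c_le tendsto_u) (fun k => ?_) hadd hsub
  exact norm_smul_inv_norm (norm_pos_iff.1 ((half_pos norm_pos).trans_le (c_le k)))

end Cutoff

theorem exists_mem_apply_ne_zero_of_one_eq {K 𝕜 X : Type*} [TopologicalSpace K] [RCLike 𝕜]
    [NormedAddCommGroup X] [NormedSpace 𝕜 X] {S : Submodule 𝕜 C(K, X)}
    (hone : ∃ f ∈ S, ∃ φ : X →L[𝕜] 𝕜, ∀ t, (1 : C(K, 𝕜)) t = φ (f t)) (t : K) :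
    ∃ f ∈ S, f t ≠ 0 := by
  obtain ⟨f, hf, φ, hφ⟩ := hone
  exact ⟨f, hf, fun h => one_ne_zero ((hφ t).trans (by rw [h, map_zero]))⟩

theorem stmt_7_general {K 𝕜 X : Type*} [TopologicalSpace K] [CompactSpace K] [RCLike 𝕜]
    [NormedAddCommGroup X] [NormedSpace 𝕜 X] (S : Submodule 𝕜 C(K, X))
    (hS : ∀ t, ∃ f ∈ S, f t ≠ 0) (A : Subalgebra 𝕜 C(K, 𝕜)) (hA : IsClosed (A : Set C(K, 𝕜)))
    (hmul : ∀ φ ∈ A, ∀ f ∈ S, φ • f ∈ S) (hAinf : ¬ FiniteDimensional 𝕜 A)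
    (W : Set (WeakSpace 𝕜 S)) (hW : IsOpen W)
    (hne : (toWeakSpace 𝕜 S ⁻¹' W ∩ Metric.closedBall 0 1).Nonempty) :
    Metric.diam (toWeakSpace 𝕜 S ⁻¹' W ∩ Metric.closedBall 0 1) = 2 := by
  obtain ⟨p, hpA, hp, not_isOpen⟩ := exists_mem_not_isOpen_setOf_eq_one hA hAinf
  obtain ⟨t₀, ht₀, hfreq⟩ : ∃ t₀, p t₀ = 1 ∧ ∃ᶠ t in 𝓝 t₀, p t ≠ 1 := by
    simpa [isOpen_iff_eventually] using not_isOpen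
  obtain ⟨f, hf, hft₀⟩ := hS t₀
  exact diam_eq_two_of_peakApprox_smul_mem hp ht₀ hfreq
    (fun n => hmul _ (peakApprox_mem hA hpA hp n)) hf hft₀ hW hne

/- STATEMENT 7: Let `S` be an `X`-valued function space over a uniform algebra on a
compact Hausdorff space `K`, i.e. a closed subspace of `C(K,X)` whose base algebra
`A = {x* ∘ f : f ∈ S, x* ∈ X*}` is a uniform algebra on `K` (a closed subalgebra of
`C(K,ℂ)` separating points) with `φ·f ∈ S` for all `φ ∈ A`, `f ∈ S`. If `A` is
infinite-dimensional then `S` has the diameter two property: every nonempty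
relatively weakly open subset of the closed unit ball of `S` has diameter two. -/
theorem stmt_7 {K : Type*} [TopologicalSpace K] [CompactSpace K] [T2Space K]
    {X : Type*} [NormedAddCommGroup X] [NormedSpace ℂ X] [CompleteSpace X] [Nontrivial X]
    (S : Submodule ℂ C(K, X)) (hSclosed : IsClosed (S : Set C(K, X)))
    (A : Subalgebra ℂ C(K, ℂ))
    (hAbase : (A : Set C(K, ℂ)) =
      {g : C(K, ℂ) | ∃ f ∈ S, ∃ φ : X →L[ℂ] ℂ, ∀ t : K, g t = φ (f t)})
    (hAclosed : IsClosed (A : Set C(K, ℂ)))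
    (hAsep : ∀ s t : K, s ≠ t → ∃ f ∈ A, f s ≠ f t)
    (hmul : ∀ φ ∈ A, ∀ f ∈ S, φ • f ∈ S)
    (hAinf : ¬ FiniteDimensional ℂ A) :
    ∀ W : Set (WeakSpace ℂ S), IsOpen W →
      ((⇑(toWeakSpace ℂ S) ⁻¹' W) ∩ Metric.closedBall (0 : S) 1).Nonempty →
      Metric.diam ((⇑(toWeakSpace ℂ S) ⁻¹' W) ∩ Metric.closedBall (0 : S) 1) = 2 :=
  stmt_7_general S (exists_mem_apply_ne_zero_of_one_eq (hAbase.subset A.one_mem)) A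
    hAclosed hmul hAinf
end

section
/- Let Ω be a Hausdorff space, X a complex Banach space, and S a closed subspace of the Banach space C_b(Ω,X) of bounded continuous X-valued functions with the supremum norm, such that A := {x* ∘ g : g ∈ S, x* ∈ X*} is a function algebra on Ω. Let M_A be the set of nonzero multiplicative linear functionals (characters) on A. For g ∈ S and φ ∈ M_A, define ĝ(φ) : X* → ℂ by ĝ(φ)(x*) = φ(x* ∘ g). Then ĝ(φ) is a bounded linear functional on X* (i.e., ĝ(φ) ∈ X**) for every φ ∈ M_A, and sup_{φ∈M_A} ‖ĝ(φ)‖_{X**} = ‖g‖ = sup_{t∈Ω} ‖g(t)‖_X; that is, the map g ↦ ĝ is an isometry. -/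
open BoundedContinuousFunction

set_option maxHeartbeats 1000000
set_option synthInstance.maxHeartbeats 1000000

/-!
A point `t` of `Ω` gives the character `δ_t` of `A`, and `ĝ(δ_t)` is the image of `g t` in the
bidual, which by Hahn–Banach has norm `‖g t‖`; hence `‖g‖ ≤ sup_φ ‖ĝ(φ)‖`. Conversely `ĝ(φ)` is
the composition of `φ`, which is a contraction, with `x' ↦ x' ∘ g`, which has norm at most `‖g‖`.
-/

section Characters

open WeakDual

-- Multiplicativity gives `‖φ a‖ * ‖φ‖ = ‖b ↦ φ (a * b)‖ ≤ ‖φ‖ * ‖a‖`.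
theorem norm_toCLM_characterSpace_le_one {𝕜 A : Type*} [NontriviallyNormedField 𝕜]
    [NonUnitalSeminormedRing A] [NormedSpace 𝕜 A] (φ : characterSpace 𝕜 A) :
    ‖CharacterSpace.toCLM φ‖ ≤ 1 := by
  set f := CharacterSpace.toCLM φ
  have norm_pos : 0 < ‖f‖ := by
    obtain ⟨b, hb⟩ := DFunLike.ne_iff.mp φ.prop.1
    exact pos_of_mul_pos_left ((norm_pos_iff.mpr hb).trans_le (f.le_opNorm b)) (norm_nonneg b)
  refine f.opNorm_le_bound zero_le_one fun a ↦ ?_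
  have norm_smul_le : ‖f a • f‖ ≤ ‖f‖ * ‖a‖ := by
    refine (f a • f).opNorm_le_bound (by positivity) fun b ↦ ?_
    calc ‖(f a • f) b‖ = ‖f (a * b)‖ := congrArg norm (φ.prop.2 a b).symm
      _ ≤ ‖f‖ * (‖a‖ * ‖b‖) := f.le_opNorm_of_le (norm_mul_le a b)
      _ = ‖f‖ * ‖a‖ * ‖b‖ := (mul_assoc ..).symm
  rw [norm_smul, mul_comm] at norm_smul_le
  simpa only [one_mul] using le_of_mul_le_mul_left norm_smul_le norm_pos

/-- Evaluation at the point `t`, as a character of an algebra of bounded continuous functions. -/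
noncomputable def evalCharacter {𝕜 Ω : Type*} [NormedField 𝕜] [TopologicalSpace Ω]
    (A : Subalgebra 𝕜 (Ω →ᵇ 𝕜)) (t : Ω) : characterSpace 𝕜 A :=
  ⟨evalCLM 𝕜 t ∘L A.toSubmodule.subtypeL,
    fun h ↦ one_ne_zero (α := 𝕜) (DFunLike.congr_fun h (1 : A)), fun _ _ ↦ rfl⟩

end Characters

section BidualTransform

open WeakDual

variable {𝕜 Ω X : Type*} [TopologicalSpace Ω] [SeminormedAddCommGroup X]

section NontriviallyNormedField

variable [NontriviallyNormedField 𝕜] [NormedSpace 𝕜 X]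

variable (𝕜) in
/-- The operator `x' ↦ x' ∘ g` from the dual of `X` to the bounded continuous scalar functions. -/
noncomputable def dualComp (g : Ω →ᵇ X) : StrongDual 𝕜 X →L[𝕜] Ω →ᵇ 𝕜 :=
  LinearMap.mkContinuous
    { toFun := fun x' ↦ x'.compLeftContinuousBounded Ω g
      map_add' := fun _ _ ↦ rfl
      map_smul' := fun _ _ ↦ rfl }
    ‖g‖ fun x' ↦ (norm_le (by positivity)).mpr fun t ↦
      (x'.le_opNorm_of_le (g.norm_coe_le_norm t)).trans_eq (mul_comm ..)

theorem norm_dualComp_le (g : Ω →ᵇ X) : ‖dualComp 𝕜 g‖ ≤ ‖g‖ :=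
  LinearMap.mkContinuous_norm_le _ (norm_nonneg g) _

/-- The element `ĝ(φ) : x' ↦ φ (x' ∘ g)` of the bidual of `X`, for a character `φ` of an algebra
`A` containing all the functions `x' ∘ g`. -/
noncomputable def bidualTransform (A : Subalgebra 𝕜 (Ω →ᵇ 𝕜)) (g : Ω →ᵇ X)
    (hg : ∀ x', dualComp 𝕜 g x' ∈ A) (φ : characterSpace 𝕜 A) :
    StrongDual 𝕜 (StrongDual 𝕜 X) :=
  CharacterSpace.toCLM φ ∘L (dualComp 𝕜 g).codRestrict A.toSubmodule hg

variable {A : Subalgebra 𝕜 (Ω →ᵇ 𝕜)} {g : Ω →ᵇ X} (hg : ∀ x', dualComp 𝕜 g x' ∈ A)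

theorem bidualTransform_apply_eq (φ : characterSpace 𝕜 A) {ψ : A} {x' : StrongDual 𝕜 X}
    (hψ : ∀ t, (ψ : Ω →ᵇ 𝕜) t = x' (g t)) : bidualTransform A g hg φ x' = φ ψ :=
  congrArg φ (Subtype.ext (BoundedContinuousFunction.ext fun t ↦ (hψ t).symm))

theorem norm_bidualTransform_le (φ : characterSpace 𝕜 A) : ‖bidualTransform A g hg φ‖ ≤ ‖g‖ := by
  refine ContinuousLinearMap.opNorm_le_bound _ (norm_nonneg g) fun x' ↦ ?_
  calc ‖bidualTransform A g hg φ x'‖ ≤ 1 * ‖dualComp 𝕜 g x'‖ :=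
        (CharacterSpace.toCLM φ).le_of_opNorm_le (norm_toCLM_characterSpace_le_one φ)
          ⟨dualComp 𝕜 g x', hg x'⟩
    _ = ‖dualComp 𝕜 g x'‖ := one_mul _
    _ ≤ ‖g‖ * ‖x'‖ := (dualComp 𝕜 g).le_of_opNorm_le (norm_dualComp_le g) x'

theorem bidualTransform_evalCharacter (t : Ω) :
    bidualTransform A g hg (evalCharacter A t) = NormedSpace.inclusionInDoubleDual 𝕜 X (g t) :=
  rfl

end NontriviallyNormedField

variable [RCLike 𝕜] [NormedSpace 𝕜 X] {A : Subalgebra 𝕜 (Ω →ᵇ 𝕜)} {g : Ω →ᵇ X}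

theorem norm_bidualTransform_evalCharacter (hg : ∀ x', dualComp 𝕜 g x' ∈ A) (t : Ω) :
    ‖bidualTransform A g hg (evalCharacter A t)‖ = ‖g t‖ := by
  rw [bidualTransform_evalCharacter]
  exact (NormedSpace.inclusionInDoubleDualLi 𝕜).norm_map (g t)

theorem iSup_norm_bidualTransform (hg : ∀ x', dualComp 𝕜 g x' ∈ A) :
    ⨆ φ, ‖bidualTransform A g hg φ‖ = ‖g‖ := by
  have bddAbove : BddAbove (Set.range fun φ ↦ ‖bidualTransform A g hg φ‖) :=
    ⟨‖g‖, Set.forall_mem_range.mpr (norm_bidualTransform_le hg)⟩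
  refine le_antisymm (Real.iSup_le (norm_bidualTransform_le hg) (norm_nonneg g)) ?_
  refine (norm_le (Real.iSup_nonneg fun φ ↦ norm_nonneg (bidualTransform A g hg φ))).mpr
    fun t ↦ ?_
  calc ‖g t‖ = ‖bidualTransform A g hg (evalCharacter A t)‖ :=
        (norm_bidualTransform_evalCharacter hg t).symm
    _ ≤ ⨆ φ, ‖bidualTransform A g hg φ‖ := le_ciSup bddAbove (evalCharacter A t)

end BidualTransform

theorem stmt_9_general {𝕜 Ω X : Type*} [RCLike 𝕜] [TopologicalSpace Ω]
    [SeminormedAddCommGroup X] [NormedSpace 𝕜 X] (A : Subalgebra 𝕜 (Ω →ᵇ 𝕜)) (g : Ω →ᵇ X)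
    (hg : ∀ x' : StrongDual 𝕜 X, x'.compLeftContinuousBounded Ω g ∈ A) :
    ∃ G : WeakDual.characterSpace 𝕜 A → StrongDual 𝕜 (StrongDual 𝕜 X),
      (∀ (φ : WeakDual.characterSpace 𝕜 A) (ψ : A) (x' : StrongDual 𝕜 X),
        (∀ t, (ψ : Ω →ᵇ 𝕜) t = x' (g t)) → G φ x' = φ ψ) ∧
      ⨆ φ, ‖G φ‖ = ‖g‖ :=
  ⟨bidualTransform A g hg, fun φ _ _ hψ ↦ bidualTransform_apply_eq hg φ hψ,
    iSup_norm_bidualTransform hg⟩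

/- STATEMENT 9: Let `Ω` be a Hausdorff space, `X` a complex Banach space, and `S` a
closed subspace of `C_b(Ω,X)` such that `A = {x* ∘ g : g ∈ S, x* ∈ X*}` is a function
algebra on `Ω`. For `g ∈ S` and a character `φ` of `A`, define `ĝ(φ)(x*) = φ(x* ∘ g)`.
Then `ĝ(φ)` is a bounded linear functional on `X*` (an element `G φ` of `X**`) for
every character `φ`, and `sup_φ ‖ĝ(φ)‖ = ‖g‖`, i.e. `g ↦ ĝ` is an isometry. -/
theorem stmt_9 {Ω : Type*} [TopologicalSpace Ω] [T2Space Ω]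
    {X : Type*} [NormedAddCommGroup X] [NormedSpace ℂ X] [CompleteSpace X]
    (S : Submodule ℂ (Ω →ᵇ X)) (hSclosed : IsClosed (S : Set (Ω →ᵇ X)))
    (A : Subalgebra ℂ (Ω →ᵇ ℂ))
    (hAbase : (A : Set (Ω →ᵇ ℂ)) =
      {h : Ω →ᵇ ℂ | ∃ g ∈ S, ∃ φ : X →L[ℂ] ℂ, ∀ t : Ω, h t = φ (g t)})
    (hAclosed : IsClosed (A : Set (Ω →ᵇ ℂ)))
    (hAsep : ∀ s t : Ω, s ≠ t → ∃ h ∈ A, h s ≠ h t) :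
    ∀ g ∈ S, ∃ G : WeakDual.characterSpace ℂ A → ((X →L[ℂ] ℂ) →L[ℂ] ℂ),
      (∀ (φ : WeakDual.characterSpace ℂ A) (ψ : A) (x' : X →L[ℂ] ℂ),
        (∀ t : Ω, (ψ : Ω →ᵇ ℂ) t = x' (g t)) → G φ x' = φ ψ) ∧
      (⨆ φ : WeakDual.characterSpace ℂ A, ‖G φ‖) = ‖g‖ := by
  intro g hg
  refine stmt_9_general A g fun x' ↦ ?_
  exact hAbase.ge ⟨g, hg, x', fun _ ↦ rfl⟩
end
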